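/- arXiv:0905.2245 — 2 statements merged into one kernel-verified Lean document; each statement's English description precedes it below -/
import Mathlib

section
/- Let R be a basic left Harada algebra as below, let I be the two-sided ideal I := ⊕_{i,j} rad^{n_i-j+1}(e_{ij}R), set R̄ := R/I, and let F(T) := T ⊗_R R̄. Then for every finitely generated right R-module T of projective dimension at most 1, one has Ext^1_R(T, T) = 0 if and only if Ext^1_{R̄}(F(T), F(T)) = 0. -/
/-!
Common setup.  `K` is an algebraically closed field and `R` a finite-dimensional associative
unital `K`-algebra.  Right `R`-modules are formalized as modules over the opposite ring `Rᵐᵒᵖ`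
(so that `MulOpposite.op r • x = x * r`).
-/

open MulOpposite

/-- The right ideal `xR` of a ring `R`, as a submodule of `R` over `Rᵐᵒᵖ`. -/
def rightIdeal (R : Type) [Ring R] (x : R) : Submodule Rᵐᵒᵖ R :=
  Submodule.span Rᵐᵒᵖ {x}

/-- The Jacobson radical of a submodule `N` (the intersection of the maximal submodules of the
module `N`), viewed as a submodule of the ambient module.  Iterating this operation gives the
iterated radicals `rad^k`. -/
def radSub {A M : Type} [Ring A] [AddCommGroup M] [Module A M] (N : Submodule A M) :
    Submodule A M :=
  Submodule.map N.subtype (sInf {P : Submodule A ↥N | IsCoatom P})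

/-- A module is indecomposable if it is nonzero and admits no nontrivial direct sum
decomposition. -/
def IsIndecomposableMod (A M : Type) [Ring A] [AddCommGroup M] [Module A M] : Prop :=
  Nontrivial M ∧ ∀ N N' : Submodule A M, IsCompl N N' → N = ⊥ ∨ N' = ⊥

/-- A module has projective dimension at most one iff it admits a surjection from a projective
module with projective kernel. -/
def PdLeOne (A : Type) [Ring A] (M : Type) [AddCommGroup M] [Module A M] : Prop :=
  ∃ (P : ModuleCat.{0} A) (f : ↥P →ₗ[A] M),
    Module.Projective A ↥P ∧ Function.Surjective f ∧
      Module.Projective A ↥(LinearMap.ker f)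

/-- `Ext¹_A(M,N) = 0`, expressed by the splitting of every short exact sequence
`0 → N → E → M → 0`. -/
def Ext1Zero (A : Type) [Ring A] (M N : Type) [AddCommGroup M] [Module A M]
    [AddCommGroup N] [Module A N] : Prop :=
  ∀ (E : ModuleCat.{0} A) (i : N →ₗ[A] ↥E) (p : ↥E →ₗ[A] M),
    Function.Injective i → Function.Surjective p → LinearMap.range i = LinearMap.ker p →
    ∃ s : M →ₗ[A] ↥E, p.comp s = LinearMap.id

/-- `X ∈ add T` : `X` is a direct summand of a finite direct sum of copies of `T`. -/
def InAdd (A : Type) [Ring A] (T X : Type) [AddCommGroup T] [Module A T]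
    [AddCommGroup X] [Module A X] : Prop :=
  ∃ (k : ℕ) (f : X →ₗ[A] (Fin k → T)) (g : (Fin k → T) →ₗ[A] X),
    g.comp f = LinearMap.id

/-- `T` is a (finitely generated) tilting right `R`-module: projective dimension at most one,
no self-extensions, and there is a short exact sequence `0 → R → T₀ → T₁ → 0` with
`T₀, T₁ ∈ add T`. -/
def IsTiltingRight (R : Type) [Ring R] (T : Type) [AddCommGroup T] [Module Rᵐᵒᵖ T] : Prop :=
  Module.Finite Rᵐᵒᵖ T ∧ PdLeOne Rᵐᵒᵖ T ∧ Ext1Zero Rᵐᵒᵖ T T ∧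
    ∃ (T₀ T₁ : ModuleCat.{0} Rᵐᵒᵖ) (f : R →ₗ[Rᵐᵒᵖ] ↥T₀) (g : ↥T₀ →ₗ[Rᵐᵒᵖ] ↥T₁),
      InAdd Rᵐᵒᵖ T ↥T₀ ∧ InAdd Rᵐᵒᵖ T ↥T₁ ∧
        Function.Injective f ∧ Function.Surjective g ∧ LinearMap.range f = LinearMap.ker g

/-- `T` is basic: it is an (internal) direct sum of pairwise non-isomorphic indecomposable
submodules. -/
def IsBasicMod (A : Type) [Ring A] (T : Type) [AddCommGroup T] [Module A T] : Prop :=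
  ∃ (k : ℕ) (N : Fin k → Submodule A T),
    DirectSum.IsInternal N ∧ (∀ a, IsIndecomposableMod A ↥(N a)) ∧
      ∀ a b, a ≠ b → IsEmpty (↥(N a) ≃ₗ[A] ↥(N b))

/-- The setoid identifying isomorphic modules (among those with property `P`). -/
def isoSetoid (A : Type) [Ring A] (P : ModuleCat.{0} A → Prop) :
    Setoid {M : ModuleCat.{0} A // P M} where
  r M N := Nonempty (↥M.1 ≃ₗ[A] ↥N.1)
  iseqv := ⟨fun M => ⟨LinearEquiv.refl A ↥M.1⟩, fun ⟨e⟩ => ⟨e.symm⟩,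
    fun ⟨e⟩ ⟨f⟩ => ⟨e.trans f⟩⟩

/-- The data exhibiting a ring `R` as a basic left Harada algebra:
a complete set `{e i j}` of orthogonal primitive idempotents with pairwise non-isomorphic
right ideals `(e i j)R` (`R` is basic), such that each `(e i 0)R` is an injective right
module, and `(e i j)R ≅ rad ((e i (j-1))R)` for `j ≥ 1`.  (Indices are shifted by one from
the paper: the paper's `e_{ij}` is `e i (j-1)` here.) -/
structure HaradaData (R : Type) [Ring R] : Type where
  m : ℕ
  hm : 0 < m
  n : Fin m → ℕ
  hn : ∀ i, 0 < n i
  e : (i : Fin m) → Fin (n i) → R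
  idem : ∀ i j, IsIdempotentElem (e i j)
  orth : ∀ p q : Σ i : Fin m, Fin (n i), p ≠ q → e p.1 p.2 * e q.1 q.2 = 0
  sum_eq_one : ∑ p : Σ i : Fin m, Fin (n i), e p.1 p.2 = 1
  indec : ∀ i j, IsIndecomposableMod Rᵐᵒᵖ ↥(rightIdeal R (e i j))
  basic : ∀ p q : Σ i : Fin m, Fin (n i), p ≠ q →
    IsEmpty (↥(rightIdeal R (e p.1 p.2)) ≃ₗ[Rᵐᵒᵖ] ↥(rightIdeal R (e q.1 q.2)))
  inj : ∀ i, Module.Injective Rᵐᵒᵖ ↥(rightIdeal R (e i ⟨0, hn i⟩))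
  rad_iso : ∀ (i : Fin m) (j : Fin (n i)), 0 < j.val →
    Nonempty (↥(rightIdeal R (e i j)) ≃ₗ[Rᵐᵒᵖ]
      ↥(radSub (rightIdeal R (e i ⟨j.val - 1, Nat.lt_of_le_of_lt (Nat.sub_le j.val 1) j.isLt⟩))))

variable {R : Type} [Ring R]

/-- `H.P i j = rad^j ((e i 0)R)`; this is the paper's `P_{i,j+1} = rad^j (e_{i1}R)`,
a submodule of `R`. -/
def HaradaData.P (H : HaradaData R) (i : Fin H.m) (j : Fin (H.n i)) : Submodule Rᵐᵒᵖ R :=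
  radSub^[j.val] (rightIdeal R (H.e i ⟨0, H.hn i⟩))

/-- The quotient module `P_{ik}/P_{il}` (for `l ≥ k` we have `H.P i l ≤ H.P i k`). -/
abbrev HaradaData.Quot (H : HaradaData R) (i : Fin H.m) (k l : Fin (H.n i)) : Type :=
  ↥(H.P i k) ⧸ Submodule.comap (H.P i k).subtype (H.P i l)

/-- The last index (the paper's `n_i`) in `Fin (H.n i)`. -/
def HaradaData.last (H : HaradaData R) (i : Fin H.m) : Fin (H.n i) :=
  ⟨H.n i - 1, Nat.sub_lt (H.hn i) one_pos⟩

/-- The right ideal `I = ⊕_{i,j} rad^{n_i - j + 1}(e_{ij}R)` of the paper. -/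
def HaradaData.I (H : HaradaData R) : Submodule Rᵐᵒᵖ R :=
  ⨆ p : Σ i : Fin H.m, Fin (H.n i),
    radSub^[H.n p.1 - p.2.val] (rightIdeal R (H.e p.1 p.2))

/-- The submodule `T·I` of a right module `T`, for `I` a right ideal of `R`. -/
def smulSub (I : Submodule Rᵐᵒᵖ R) (T : Type) [AddCommGroup T] [Module Rᵐᵒᵖ T] :
    Submodule Rᵐᵒᵖ T :=
  Submodule.span Rᵐᵒᵖ {x : T | ∃ (t : T) (r : R), r ∈ I ∧ x = op r • t}

/-- Restriction of scalars along `π : R →+* S`, turning a right `S`-module into a right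
`R`-module (type synonym). -/
@[nolint unusedArguments]
def RestrictRight {R S : Type} [Ring R] [Ring S] (_ : R →+* S) (N : Type) [AddCommGroup N]
    [Module Sᵐᵒᵖ N] : Type := N

instance {R S : Type} [Ring R] [Ring S] (π : R →+* S) (N : Type) [AddCommGroup N]
    [Module Sᵐᵒᵖ N] : AddCommGroup (RestrictRight π N) := inferInstanceAs (AddCommGroup N)

instance {R S : Type} [Ring R] [Ring S] (π : R →+* S) (N : Type) [AddCommGroup N]
    [Module Sᵐᵒᵖ N] : Module Rᵐᵒᵖ (RestrictRight π N) := Module.compHom N (RingHom.op π)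


/-! ### Generic homological part -/

theorem ext1Zero_iff_extend (A : Type) [Ring A] (P M N : Type) [AddCommGroup P] [Module A P]
    [AddCommGroup M] [Module A M] [AddCommGroup N] [Module A N] [Module.Projective A P]
    (p : P →ₗ[A] M) (hp : Function.Surjective p) :
    Ext1Zero A M N ↔ ∀ g : LinearMap.ker p →ₗ[A] N, ∃ g' : P →ₗ[A] N,
      ∀ x : LinearMap.ker p, g' x = g x := by
  constructor
  · intro h g
    let d : LinearMap.ker p →ₗ[A] (N × P) := LinearMap.prod g (-(LinearMap.ker p).subtype)
    let D := LinearMap.range d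
    let i : N →ₗ[A] ((N × P) ⧸ D) := D.mkQ.comp (LinearMap.inl A N P)
    let q : ((N × P) ⧸ D) →ₗ[A] M := D.liftQ (p.comp (LinearMap.snd A N P)) (by
      rintro _ ⟨x, rfl⟩
      simp [d])
    have hi : Function.Injective i := by
      rw [injective_iff_map_eq_zero]
      intro n hn
      have h1 : ((n, 0) : N × P) ∈ D := by
        simpa [i] using hn
      obtain ⟨x, hx⟩ := h1
      have hx2 : x = 0 := by
        have := congrArg Prod.snd hx
        simpa [d] using this
      have := congrArg Prod.fst hx
      simpa [d, hx2] using this.symm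
    have hq : Function.Surjective q := by
      intro m
      obtain ⟨x, rfl⟩ := hp m
      exact ⟨D.mkQ (0, x), by simp [q]⟩
    have hr : LinearMap.range i = LinearMap.ker q := by
      ext y
      constructor
      · rintro ⟨n, rfl⟩
        simp [i, q]
      · intro hy
        obtain ⟨⟨n, x⟩, rfl⟩ := D.mkQ_surjective y
        have hx : p x = 0 := by simpa [q] using hy
        refine ⟨n + g ⟨x, hx⟩, ?_⟩
        simp only [i, LinearMap.comp_apply, LinearMap.inl_apply]
        rw [← sub_eq_zero, ← map_sub, ← LinearMap.mem_ker, Submodule.ker_mkQ]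
        exact ⟨⟨x, hx⟩, by simp [d]⟩
    obtain ⟨s, hs⟩ := h (ModuleCat.of A ((N × P) ⧸ D)) i q hi hq hr
    have hs' : ∀ m, q (s m) = m := fun m => LinearMap.congr_fun hs m
    let u : P →ₗ[A] ((N × P) ⧸ D) := D.mkQ.comp (LinearMap.inr A N P)
    have hu : ∀ x, q (u x) = p x := by intro x; simp [q, u]
    let w : P →ₗ[A] ((N × P) ⧸ D) := u - s.comp p
    have hw : ∀ x, w x ∈ LinearMap.range i := by
      intro x
      rw [hr, LinearMap.mem_ker]
      have : q (w x) = q (u x) - q (s (p x)) := by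
        rw [← map_sub]; rfl
      rw [this, hu, hs', sub_self]
    let e := LinearEquiv.ofInjective i hi
    refine ⟨e.symm.toLinearMap.comp (w.codRestrict _ hw), ?_⟩
    intro x
    apply hi
    have h1 : i (e.symm (w.codRestrict _ hw x)) = w x := by
      have := congrArg Subtype.val (e.apply_symm_apply (w.codRestrict _ hw x))
      exact this
    have h2 : w x = i (g x) := by
      have h3 : w x = u x := by
        have : w x = u x - s (p x) := rfl
        rw [this, x.2]
        erw [map_zero s]
        simp
      rw [h3, eq_comm]
      simp only [u, i, LinearMap.comp_apply, LinearMap.inl_apply, LinearMap.inr_apply]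
      rw [← sub_eq_zero, ← map_sub, ← LinearMap.mem_ker, Submodule.ker_mkQ]
      exact ⟨x, by simp [d]⟩
    exact h1.trans h2
  · intro h E i q hi hq hr
    obtain ⟨u, hu⟩ := Module.projective_lifting_property q p hq
    have hu' : ∀ x, q (u x) = p x := fun x => LinearMap.congr_fun hu x
    let e := LinearEquiv.ofInjective i hi
    have hw : ∀ x : LinearMap.ker p, (u.comp (LinearMap.ker p).subtype) x ∈ LinearMap.range i := by
      intro x
      rw [hr, LinearMap.mem_ker]
      exact (hu' x).trans x.2
    obtain ⟨g', hg'⟩ := h (e.symm.toLinearMap.comp (LinearMap.codRestrict _ _ hw))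
    have hk : LinearMap.ker p ≤ LinearMap.ker (u - i.comp g') := by
      intro x hx
      have h1 := hg' ⟨x, hx⟩
      have h2 : i (g' x) = u x := by
        have h3 := congrArg i h1
        refine h3.trans ?_
        exact congrArg Subtype.val (e.apply_symm_apply (LinearMap.codRestrict _ _ hw ⟨x, hx⟩))
      simp [h2]
    let t : P ≃ₗ[A] P := LinearEquiv.refl A P
    let e2 := p.quotKerEquivOfSurjective hp
    refine ⟨((LinearMap.ker p).liftQ (u - i.comp g') hk).comp e2.symm.toLinearMap, ?_⟩
    ext m
    obtain ⟨x, rfl⟩ := hp m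
    have h1 : e2.symm (p x) = Submodule.Quotient.mk x := by
      rw [LinearEquiv.symm_apply_eq]
      rfl
    have h2 : q (i (g' x)) = 0 := by
      have : i (g' x) ∈ LinearMap.ker q := hr ▸ ⟨_, rfl⟩
      exact this
    simp [h1, hu', h2]

theorem pdLeOne_ker_projective (A : Type) [Ring A] (T P : Type) [AddCommGroup T] [Module A T]
    [AddCommGroup P] [Module A P] [Module.Projective A P] (hpd : PdLeOne A T)
    (p : P →ₗ[A] T) (hp : Function.Surjective p) : Module.Projective A (LinearMap.ker p) := by
  obtain ⟨P', f, hP', hf, hQ⟩ := hpd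
  obtain ⟨u, hu⟩ := Module.projective_lifting_property f p hf
  obtain ⟨v, hv⟩ := Module.projective_lifting_property p f hp
  have hu' : ∀ x, f (u x) = p x := fun x => LinearMap.congr_fun hu x
  have hv' : ∀ x, p (v x) = f x := fun x => LinearMap.congr_fun hv x
  have h1 : ∀ x : P, ∀ hx : x ∈ LinearMap.ker p, -(u x) ∈ LinearMap.ker f := by
    intro x hx
    simpa [hu'] using hx
  let a : LinearMap.ker p →ₗ[A] (P × LinearMap.ker f) :=
    LinearMap.prod (LinearMap.ker p).subtype
      (LinearMap.codRestrict _ (-(u.comp (LinearMap.ker p).subtype)) (fun x => h1 x x.2))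
  let b0 : (P × LinearMap.ker f) →ₗ[A] P :=
    LinearMap.fst A _ _ - v.comp ((LinearMap.ker f).subtype.comp (LinearMap.snd A _ _)
      + u.comp (LinearMap.fst A _ _))
  let b : (P × LinearMap.ker f) →ₗ[A] LinearMap.ker p := LinearMap.codRestrict _ b0 (by
    rintro ⟨x, y⟩
    have : f y = 0 := y.2
    simp [b0, hv', hu', this])
  refine Module.Projective.of_split a b ?_
  ext x
  simp only [a, b, b0, LinearMap.comp_apply]
  have h3 : (x : P) - v (-(u x) + u x) = x := by simp
  exact h3

theorem map_mem_smul_top {A : Type} [Ring A] {M N : Type} [AddCommGroup M] [Module A M]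
    [AddCommGroup N] [Module A N] (J : Ideal A) (f : M →ₗ[A] N) {x : M}
    (hx : x ∈ J • (⊤ : Submodule A M)) : f x ∈ J • (⊤ : Submodule A N) := by
  have : f x ∈ Submodule.map f (J • (⊤ : Submodule A M)) := ⟨x, hx, rfl⟩
  rw [Submodule.map_smul''] at this
  exact Submodule.smul_mono le_rfl le_top this

theorem mem_smul_top_pi {A : Type} [Ring A] {n : ℕ} (J : Ideal A) {x : Fin n → A}
    (hx : ∀ c, x c ∈ J) : x ∈ J • (⊤ : Submodule A (Fin n → A)) := by
  have : x = ∑ c, x c • (Pi.single c 1 : Fin n → A) := by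
    ext d
    simp [Finset.sum_apply, Pi.single_apply]
  rw [this]
  exact Submodule.sum_mem _ fun c _ => Submodule.smul_mem_smul (hx c) trivial

theorem pi_mem_of_smul_top {A : Type} [Ring A] {n : ℕ} (J : Ideal A) [J.IsTwoSided] {x : Fin n → A}
    (hx : x ∈ J • (⊤ : Submodule A (Fin n → A))) (c : Fin n) : x c ∈ J := by
  have := map_mem_smul_top J (LinearMap.proj c : (Fin n → A) →ₗ[A] A) hx
  simpa using this

theorem generic_main (A B : Type) [Ring A] [Ring B] [IsNoetherianRing A] (φ : A →+* B)
    (hφ : Function.Surjective φ) (E : Type) [AddCommGroup E] [Module A E]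
    (hE : Module.Injective A E) (j : A →ₗ[A] E)
    (hA : ∀ a, j a ∈ (RingHom.ker φ) • (⊤ : Submodule A E) → φ a = 0)
    (hB : ∀ x, φ x = 0 → ∃ g : E →ₗ[A] A, ∀ a, g (j a) = a * x)
    (T : Type) [AddCommGroup T] [Module A T] [Module.Finite A T] (hpd : PdLeOne A T)
    (FT : Type) [AddCommGroup FT] [Module B FT] (τ : T →ₛₗ[φ] FT)
    (hτ : Function.Surjective τ)
    (hk : ∀ t, τ t = 0 ↔ t ∈ (RingHom.ker φ) • (⊤ : Submodule A T)) :
    Ext1Zero A T T ↔ Ext1Zero B FT FT := by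
  set J := RingHom.ker φ with hJ
  have hJm : ∀ a, a ∈ J ↔ φ a = 0 := fun a => RingHom.mem_ker
  obtain ⟨n, p, hp⟩ := Module.Finite.exists_fin' A T
  have hQ : Module.Projective A (LinearMap.ker p) := pdLeOne_ker_projective A T _ hpd p hp
  obtain ⟨k, t, ht⟩ := Module.Finite.exists_fin' A (LinearMap.ker p)
  obtain ⟨s, hs⟩ := Module.projective_lifting_property t LinearMap.id ht
  have hs' : ∀ x, t (s x) = x := fun x => LinearMap.congr_fun hs x
  -- extensions of `j ∘ s_l`
  have hρ : ∀ l : Fin k, ∃ ρ : (Fin n → A) →ₗ[A] E, ∀ q : LinearMap.ker p,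
      ρ q = j (s q l) := by
    intro l
    exact hE.out (LinearMap.ker p).subtype (Subtype.val_injective)
      (j.comp ((LinearMap.proj l).comp s))
  choose ρ hρ using hρ
  -- (1)
  have h1 : ∀ q : LinearMap.ker p, (∀ c, φ ((q : Fin n → A) c) = 0) →
      q ∈ J • (⊤ : Submodule A (LinearMap.ker p)) := by
    intro q hq
    have h2 : ∀ l, s q l ∈ J := by
      intro l
      rw [hJm]
      apply hA
      rw [← hρ]
      exact map_mem_smul_top J (ρ l) (mem_smul_top_pi J hq)
    have := map_mem_smul_top J t (mem_smul_top_pi J h2)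
    rwa [hs'] at this
  -- (2)
  have h2 : ∀ h : LinearMap.ker p →ₗ[A] (Fin n → A), (∀ q c, φ (h q c) = 0) →
      ∃ a : (Fin n → A) →ₗ[A] (Fin n → A), ∀ q : LinearMap.ker p, a q = h q := by
    intro h hh
    have : ∀ (l : Fin k) (c : Fin n), ∃ g : E →ₗ[A] A, ∀ a,
        g (j a) = a * h (t (Pi.single l 1)) c := fun l c => hB _ (hh _ _)
    choose g hg using this
    refine ⟨LinearMap.pi fun c => ∑ l, (g l c).comp (ρ l), ?_⟩
    intro q
    ext c
    have hq : h q = ∑ l, s q l • h (t (Pi.single l 1)) := by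
      conv_lhs => rw [← hs' q]
      have : s q = ∑ l, s q l • (Pi.single l 1 : Fin k → A) := by
        ext d
        simp [Finset.sum_apply, Pi.single_apply]
      conv_lhs => rw [this]
      simp only [map_sum, map_smul]
    simp [hq, hρ, hg, Finset.sum_apply]
  -- the presentation over `B`
  let y : Fin n → FT := fun c => τ (p (Pi.single c 1))
  let pB : (Fin n → B) →ₗ[B] FT := Fintype.linearCombination B y
  have hpB : ∀ x : Fin n → A, pB (fun c => φ (x c)) = τ (p x) := by
    intro x
    have hx : x = ∑ l, x l • (Pi.single l 1 : Fin n → A) := by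
      ext d
      simp [Finset.sum_apply, Pi.single_apply]
    conv_rhs => rw [hx]
    simp [pB, y, Fintype.linearCombination_apply, map_sum, LinearMap.map_smulₛₗ]
  have hpBs : Function.Surjective pB := by
    intro z
    obtain ⟨w, rfl⟩ := hτ z
    obtain ⟨x, rfl⟩ := hp w
    exact ⟨_, hpB x⟩
  have hlift : ∀ z : Fin n → B, ∃ x : Fin n → A, (fun c => φ (x c)) = z := by
    intro z
    choose x hx using fun c => hφ (z c)
    exact ⟨x, funext hx⟩
  -- reduction to `Q`
  let red : LinearMap.ker p →ₛₗ[φ] LinearMap.ker pB :=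
    { toFun := fun x => ⟨fun c => φ ((x : Fin n → A) c), by
        rw [LinearMap.mem_ker, hpB, x.2, map_zero]⟩
      map_add' := by intro x y; ext c; simp
      map_smul' := by intro a x; ext c; simp }
  have hTI : ∀ w : T, τ w = 0 → ∃ x : Fin n → A, (∀ c, φ (x c) = 0) ∧ p x = w := by
    intro w hw
    rw [hk] at hw
    have : w ∈ Submodule.map p (J • (⊤ : Submodule A (Fin n → A))) := by
      rw [Submodule.map_smul'', Submodule.map_top, LinearMap.range_eq_top.2 hp]
      exact hw
    obtain ⟨x, hx, rfl⟩ := this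
    exact ⟨x, fun c => pi_mem_of_smul_top J hx c, rfl⟩
  have hred : Function.Surjective red := by
    rintro ⟨z, hz⟩
    obtain ⟨x, rfl⟩ := hlift z
    rw [LinearMap.mem_ker, hpB] at hz
    obtain ⟨x', hx', hpx'⟩ := hTI _ hz
    refine ⟨⟨x - x', by simp [hpx']⟩, ?_⟩
    ext c
    simp [red, hx']
  rw [ext1Zero_iff_extend A (Fin n → A) T T p hp, ext1Zero_iff_extend B (Fin n → B) FT FT pB hpBs]
  -- lifting property for semilinear maps out of projectives
  have semilift : ∀ (X : Type) [AddCommGroup X] [Module A X] [Module.Projective A X]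
      (h : X →ₛₗ[φ] FT), ∃ h' : X →ₗ[A] T, ∀ x, τ (h' x) = h x := by
    intro X _ _ _ h
    let _ : Module A FT := Module.compHom FT φ
    let τ' : T →ₗ[A] FT :=
      { toFun := τ, map_add' := map_add τ, map_smul' := fun a x => LinearMap.map_smulₛₗ τ a x }
    let h1 : X →ₗ[A] FT :=
      { toFun := h, map_add' := map_add h, map_smul' := fun a x => LinearMap.map_smulₛₗ h a x }
    obtain ⟨h', hh'⟩ := Module.projective_lifting_property τ' h1 hτ
    exact ⟨h', fun x => LinearMap.congr_fun hh' x⟩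
  constructor
  · intro h g
    obtain ⟨g1, hg1⟩ := semilift (LinearMap.ker p) (g.comp red)
    obtain ⟨g2, hg2⟩ := h g1
    let g3 : (Fin n → B) →ₗ[B] FT := Fintype.linearCombination B fun c => τ (g2 (Pi.single c 1))
    have hg3 : ∀ x : Fin n → A, g3 (fun c => φ (x c)) = τ (g2 x) := by
      intro x
      have hx : x = ∑ l, x l • (Pi.single l 1 : Fin n → A) := by
        ext d
        simp [Finset.sum_apply, Pi.single_apply]
      conv_rhs => rw [hx]
      simp [g3, Fintype.linearCombination_apply, map_sum, LinearMap.map_smulₛₗ]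
    refine ⟨g3, ?_⟩
    intro z
    obtain ⟨x, rfl⟩ := hred z
    exact (hg3 x).trans (by rw [hg2, hg1]; rfl)
  · intro h h0
    -- the induced map on the `B`-kernel
    have hker0 : ∀ x x', red x = red x' → τ (h0 x) = τ (h0 x') := by
      intro x x' hx
      rw [← sub_eq_zero, ← map_sub, ← map_sub, hk]
      apply map_mem_smul_top
      apply h1
      intro c
      have := congrFun (congrArg Subtype.val hx) c
      have h3 : φ ((x : Fin n → A) c) = φ ((x' : Fin n → A) c) := this
      simp [h3]
    let σ := Function.surjInv hred
    have hσ : ∀ z, red (σ z) = z := Function.surjInv_eq hred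
    let g : LinearMap.ker pB →ₗ[B] FT :=
      { toFun := fun z => τ (h0 (σ z))
        map_add' := by
          intro z z'
          rw [← map_add, ← map_add]
          apply hker0
          rw [map_add, hσ, hσ, hσ]
        map_smul' := by
          intro b z
          obtain ⟨a, rfl⟩ := hφ b
          rw [RingHom.id_apply, ← LinearMap.map_smulₛₗ, ← map_smul]
          apply hker0
          rw [LinearMap.map_smulₛₗ, hσ, hσ] }
    have hg : ∀ x, g (red x) = τ (h0 x) := by
      intro x
      exact hker0 _ _ (hσ _)
    obtain ⟨g', hg'⟩ := h g
    let r : (Fin n → A) →ₛₗ[φ] FT :=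
      { toFun := fun x => g' (fun c => φ (x c))
        map_add' := by
          intro x y
          rw [← map_add]; congr 1; ext c; simp
        map_smul' := by
          intro a x
          rw [← map_smul]; congr 1; ext c; simp }
    obtain ⟨a, ha⟩ := semilift (Fin n → A) r
    let h' : LinearMap.ker p →ₗ[A] T := h0 - a.comp (LinearMap.ker p).subtype
    have hh' : ∀ q, h' q ∈ J • (⊤ : Submodule A T) := by
      intro q
      rw [← hk]
      have : h' q = h0 q - a q := rfl
      rw [this, map_sub, ha, ← hg, ← hg']
      exact sub_self _
    let W : Submodule A (Fin n → A) := J • ⊤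
    have hpW : ∀ x : W, p x ∈ J • (⊤ : Submodule A T) := fun x => map_mem_smul_top J p x.2
    let pW : W →ₗ[A] (J • (⊤ : Submodule A T) : Submodule A T) :=
      LinearMap.codRestrict _ (p.comp W.subtype) hpW
    have hpWs : Function.Surjective pW := by
      rintro ⟨w, hw⟩
      obtain ⟨x, hx, hx'⟩ := hTI w ((hk w).2 hw)
      exact ⟨⟨x, mem_smul_top_pi J hx⟩, Subtype.ext hx'⟩
    obtain ⟨b, hb⟩ := Module.projective_lifting_property pW (h'.codRestrict _ hh') hpWs
    have hb' : ∀ q, p (b q) = h' q := fun q =>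
      congrArg Subtype.val (LinearMap.congr_fun hb q)
    obtain ⟨a2, ha2⟩ := h2 (W.subtype.comp b) (fun q c => pi_mem_of_smul_top J (b q).2 c)
    refine ⟨a + p.comp a2, ?_⟩
    intro q
    have h5 : p (a2 q) = h' q := by rw [ha2]; exact hb' q
    have h6 : h' q = h0 q - a q := rfl
    simp [h5, h6]

/-! ### Radicals -/

section Radicals

variable {A : Type} [Ring A] {M N : Type} [AddCommGroup M] [Module A M] [AddCommGroup N] [Module A N]

theorem radSub_eq (X : Submodule A M) :
    radSub X = Submodule.map X.subtype (Module.jacobson A X) := rfl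

theorem radSub_le (X : Submodule A M) : radSub X ≤ X := by
  rw [radSub_eq]
  exact Submodule.map_subtype_le _ _

theorem radSub_iter_le (X : Submodule A M) (k : ℕ) : radSub^[k] X ≤ X := by
  induction k with
  | zero => exact le_rfl
  | succ k ih =>
    rw [Function.iterate_succ_apply']
    exact (radSub_le _).trans ih

theorem radSub_iter_anti (X : Submodule A M) {k l : ℕ} (h : k ≤ l) :
    radSub^[l] X ≤ radSub^[k] X := by
  obtain ⟨d, rfl⟩ := Nat.exists_eq_add_of_le' h
  rw [Function.iterate_add_apply]
  exact radSub_iter_le _ _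

theorem map_radSub (f : M →ₗ[A] N) (hf : Function.Injective f) (X : Submodule A M) :
    Submodule.map f (radSub X) = radSub (Submodule.map f X) := by
  rw [radSub_eq, radSub_eq]
  let e := Submodule.equivMapOfInjective f hf X
  have h := Module.map_jacobson_of_bijective (f := e.toLinearMap) e.bijective
  rw [← h, ← Submodule.map_comp, ← Submodule.map_comp]
  rfl

theorem map_radSub_iter (f : M →ₗ[A] N) (hf : Function.Injective f) (k : ℕ) (X : Submodule A M) :
    Submodule.map f (radSub^[k] X) = radSub^[k] (Submodule.map f X) := by
  induction k with
  | zero => rfl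
  | succ k ih =>
    rw [Function.iterate_succ_apply', Function.iterate_succ_apply', map_radSub f hf, ih]

theorem radSub_top : radSub (⊤ : Submodule A M) = Module.jacobson A M := by
  rw [radSub_eq]
  exact Module.map_jacobson_of_bijective (f := (⊤ : Submodule A M).subtype)
    ⟨Subtype.val_injective, fun x => ⟨⟨x, trivial⟩, rfl⟩⟩

theorem radSub_range (f : M →ₗ[A] N) (hf : Function.Injective f) :
    radSub (LinearMap.range f) = Submodule.map f (Module.jacobson A M) := by
  rw [← radSub_top, map_radSub f hf, Submodule.map_top]

/-- An indecomposable projective module of finite length is local. -/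
theorem le_jacobson_of_ne_top [IsNoetherian A M] [IsArtinian A M] [Module.Projective A M]
    (hM : IsIndecomposableMod A M) (X : Submodule A M) (hX : X ≠ ⊤) :
    X ≤ Module.jacobson A M := by
  refine le_sInf fun Y hY => ?_
  by_contra hXY
  have hsup : X ⊔ Y = ⊤ := by
    rcases hY.le_iff.1 (le_sup_right : Y ≤ X ⊔ Y) with h | h
    · exact h
    · exact absurd (le_sup_left.trans h.le) hXY
  have hs : Function.Surjective (Y.mkQ.comp X.subtype) := by
    intro z
    obtain ⟨m, rfl⟩ := Y.mkQ_surjective z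
    have : m ∈ X ⊔ Y := hsup ▸ trivial
    obtain ⟨x, hx, y, hy, rfl⟩ := Submodule.mem_sup.1 this
    refine ⟨⟨x, hx⟩, ?_⟩
    simpa using hy
  obtain ⟨g0, hg0⟩ := Module.projective_lifting_property (Y.mkQ.comp X.subtype) Y.mkQ hs
  let g : Module.End A M := X.subtype.comp g0
  have hg : ∀ m, Y.mkQ (g m) = Y.mkQ m := fun m => LinearMap.congr_fun hg0 m
  have hgk : ∀ k m, Y.mkQ ((g ^ k) m) = Y.mkQ m := by
    intro k
    induction k with
    | zero => intro m; rfl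
    | succ k ih =>
      intro m
      rw [pow_succ', Module.End.mul_apply, hg, ih]
  obtain ⟨k, hk⟩ := Filter.eventually_atTop.1 g.eventually_isCompl_ker_pow_range_pow
  have hc := hk (k + 1) (by omega)
  rcases hM.2 _ _ hc with h | h
  · have hr : LinearMap.range (g ^ (k + 1)) = ⊤ := by
      have := hc.sup_eq_top
      rwa [h, bot_sup_eq] at this
    apply hX
    rw [eq_top_iff, ← hr]
    rintro _ ⟨m, rfl⟩
    rw [pow_succ', Module.End.mul_apply]
    exact (g0 _).2
  · apply hY.1
    rw [eq_top_iff]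
    intro m _
    have h0 : (g ^ (k + 1)) m = 0 := by
      have : (g ^ (k + 1)) m ∈ LinearMap.range (g ^ (k + 1)) := ⟨m, rfl⟩
      rw [h] at this
      simpa using this
    have := hgk (k + 1) m
    rw [h0, map_zero] at this
    simpa using this.symm

end Radicals

/-! ### Right ideals generated by idempotents -/

section RightIdeals

theorem mem_rightIdeal {x y : R} : y ∈ rightIdeal R x ↔ ∃ r, y = x * r := by
  unfold rightIdeal
  rw [Submodule.mem_span_singleton]
  constructor
  · rintro ⟨a, rfl⟩
    exact ⟨unop a, rfl⟩
  · rintro ⟨r, rfl⟩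
    exact ⟨op r, rfl⟩

theorem mul_mem_right (X : Submodule Rᵐᵒᵖ R) {x : R} (hx : x ∈ X) (r : R) : x * r ∈ X :=
  X.smul_mem (op r) hx

theorem mem_rightIdeal_idem {x y : R} (hx : IsIdempotentElem x) :
    y ∈ rightIdeal R x ↔ x * y = y := by
  rw [mem_rightIdeal]
  constructor
  · rintro ⟨r, rfl⟩
    rw [← mul_assoc, hx.eq]
  · intro h
    exact ⟨y, h.symm⟩

/-- Left multiplication as a map of right modules. -/
def lmul (x : R) : R →ₗ[Rᵐᵒᵖ] R where
  toFun y := x * y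
  map_add' := mul_add x
  map_smul' a y := (mul_assoc x y (unop a)).symm

@[simp] theorem lmul_apply (x y : R) : lmul x y = x * y := rfl

/-- `R` is free of rank one as a right module. -/
def opEq (R : Type) [Ring R] : Rᵐᵒᵖ ≃ₗ[Rᵐᵒᵖ] R where
  toFun := unop
  invFun := op
  left_inv _ := rfl
  right_inv _ := rfl
  map_add' _ _ := rfl
  map_smul' _ _ := rfl

theorem rightIdeal_projective {x : R} (hx : IsIdempotentElem x) :
    Module.Projective Rᵐᵒᵖ (rightIdeal R x) := by
  have : Module.Projective Rᵐᵒᵖ R := Module.Projective.of_equiv (opEq R)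
  refine Module.Projective.of_split (rightIdeal R x).subtype
    ((lmul x).codRestrict (rightIdeal R x) (fun y => mem_rightIdeal.2 ⟨y, rfl⟩)) ?_
  ext y
  exact (mem_rightIdeal_idem hx).1 y.2

end RightIdeals

/-! ### Harada algebras -/

namespace HaradaData

variable (H : HaradaData R)

/-- The injective projective module `e_{i1}R`. -/
abbrev top (i : Fin H.m) : Submodule Rᵐᵒᵖ R := rightIdeal R (H.e i ⟨0, H.hn i⟩)

theorem exists_emb (i : Fin H.m) (j : ℕ) (hj : j < H.n i) :
    ∃ φ : rightIdeal R (H.e i ⟨j, hj⟩) →ₗ[Rᵐᵒᵖ] R, Function.Injective φ ∧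
      LinearMap.range φ = radSub^[j] (H.top i) := by
  induction j with
  | zero =>
    exact ⟨Submodule.subtype _, Subtype.val_injective, by simp⟩
  | succ j ih =>
    obtain ⟨φ, hφ, hr⟩ := ih (by omega)
    obtain ⟨ψ⟩ := H.rad_iso i ⟨j + 1, hj⟩ (Nat.succ_pos j)
    have ψ' : rightIdeal R (H.e i ⟨j + 1, hj⟩) ≃ₗ[Rᵐᵒᵖ]
      radSub (rightIdeal R (H.e i ⟨j, by omega⟩)) := ψ
    refine ⟨(φ.comp (Submodule.inclusion (radSub_le _))).comp ψ'.toLinearMap, ?_, ?_⟩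
    · exact (hφ.comp (Submodule.inclusion_injective _)).comp ψ'.injective
    · rw [LinearMap.range_comp_of_range_eq_top _ (LinearEquiv.range ψ'), LinearMap.range_comp,
        Function.iterate_succ_apply', ← hr, radSub_range φ hφ]
      congr 1
      rw [Submodule.range_inclusion, radSub_eq,
        Submodule.comap_map_eq_of_injective Subtype.val_injective]

section

variable [IsNoetherian Rᵐᵒᵖ R] [IsArtinian Rᵐᵒᵖ R]

theorem uniserial (i : Fin H.m) (X : Submodule Rᵐᵒᵖ R) (hX : X ≤ H.top i) (k : ℕ)
    (hk : k ≤ H.n i) : X ≤ radSub^[k] (H.top i) ∨ ∃ l < k, X = radSub^[l] (H.top i) := by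
  induction k with
  | zero => exact Or.inl hX
  | succ k ih =>
    rcases ih (by omega) with h | ⟨l, hl, h⟩
    · obtain ⟨φ, hφ, hr⟩ := H.exists_emb i k (by omega)
      have := rightIdeal_projective (H.idem i ⟨k, by omega⟩)
      have hmap : Submodule.map φ (Submodule.comap φ X) = X := by
        rw [Submodule.map_comap_eq, hr, inf_eq_right]
        exact h
      by_cases hc : Submodule.comap φ X = ⊤
      · refine Or.inr ⟨k, by omega, ?_⟩
        rw [← hr, ← hmap, hc, Submodule.map_top]
      · left
        rw [Function.iterate_succ_apply', ← hr, radSub_range φ hφ, ← hmap]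
        exact Submodule.map_mono (le_jacobson_of_ne_top (H.indec i _) _ hc)
    · exact Or.inr ⟨l, by omega, h⟩

theorem radSub_ne (i : Fin H.m) (j : ℕ) (hj : j < H.n i) :
    ¬ (radSub^[j] (H.top i) ≤ radSub^[H.n i] (H.top i)) := by
  intro h
  obtain ⟨φ, hφ, hr⟩ := H.exists_emb i j hj
  have h1 := h.trans (radSub_iter_anti _ (Nat.succ_le_of_lt hj))
  rw [Nat.succ_eq_add_one, Function.iterate_succ_apply', ← hr, radSub_range φ hφ] at h1
  have := (H.indec i ⟨j, hj⟩).1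
  have h2 := Module.jacobson_lt_top Rᵐᵒᵖ (rightIdeal R (H.e i ⟨j, hj⟩))
  apply h2.ne
  rw [eq_top_iff]
  intro x _
  obtain ⟨y, hy, hxy⟩ := h1 ⟨x, rfl⟩
  rwa [← hφ hxy]

/-- The core lemma: maps into the radical part extend. -/
theorem core (i : Fin H.m) (j : ℕ) (hj : j < H.n i)
    (φ : rightIdeal R (H.e i ⟨j, hj⟩) →ₗ[Rᵐᵒᵖ] H.top i) (hφ : Function.Injective φ)
    (hr : Submodule.map (H.top i).subtype (LinearMap.range φ) = radSub^[j] (H.top i))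
    (i' : Fin H.m) (j' : ℕ) (hj' : j' < H.n i') (z : R)
    (hz : z ∈ radSub^[H.n i' - j'] (rightIdeal R (H.e i' ⟨j', hj'⟩))) :
    ∃ g : H.top i →ₗ[Rᵐᵒᵖ] R, ∀ y, g (φ y) = z * y := by
  obtain ⟨ψ, hψ, hψr⟩ := H.exists_emb i' j' hj'
  have hz' : ∀ y : R, z * y ∈ radSub^[H.n i' - j'] (rightIdeal R (H.e i' ⟨j', hj'⟩)) :=
    fun y => mul_mem_right _ hz y
  have hz2 : ∀ y : R, z * y ∈ rightIdeal R (H.e i' ⟨j', hj'⟩) :=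
    fun y => radSub_iter_le _ _ (hz' y)
  have hψtop : ∀ x, ψ x ∈ H.top i' := fun x =>
    radSub_iter_le _ j' (hψr ▸ ⟨x, rfl⟩)
  let ψ1 : rightIdeal R (H.e i' ⟨j', hj'⟩) →ₗ[Rᵐᵒᵖ] H.top i' := ψ.codRestrict _ hψtop
  let zm : rightIdeal R (H.e i ⟨j, hj⟩) →ₗ[Rᵐᵒᵖ] rightIdeal R (H.e i' ⟨j', hj'⟩) :=
    ((lmul z).comp (Submodule.subtype _)).codRestrict _ (fun y => hz2 y)
  obtain ⟨g1, hg1⟩ := (H.inj i').out φ hφ (ψ1.comp zm)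
  let g2 : H.top i →ₗ[Rᵐᵒᵖ] R := (H.top i').subtype.comp g1
  have hg2 : ∀ y, g2 (φ y) = ψ (zm y) := fun y => congrArg Subtype.val (hg1 y)
  have key : LinearMap.range g2 ≤ LinearMap.range ψ := by
    rw [hψr]
    rcases H.uniserial i' (LinearMap.range g2) (by
      rintro _ ⟨x, rfl⟩
      exact (g1 x).2) j' hj'.le with h | ⟨k, hk, h⟩
    · exact h
    exfalso
    obtain ⟨χ, hχ, hχr⟩ := H.exists_emb i' k (by omega)
    have hproj := rightIdeal_projective (H.idem i' ⟨k, by omega⟩)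
    let e1 := LinearEquiv.ofInjective χ hχ
    have hg2r : ∀ x, g2 x ∈ LinearMap.range χ := by
      intro x
      rw [hχr, ← h]
      exact ⟨x, rfl⟩
    let g3 : H.top i →ₗ[Rᵐᵒᵖ] rightIdeal R (H.e i' ⟨k, by omega⟩) :=
      e1.symm.toLinearMap.comp (g2.codRestrict _ hg2r)
    have hg3 : ∀ x, χ (g3 x) = g2 x := fun x =>
      congrArg Subtype.val (e1.apply_symm_apply (g2.codRestrict _ hg2r x))
    have hg3s : Function.Surjective g3 := by
      intro y
      have : χ y ∈ LinearMap.range g2 := by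
        rw [h, ← hχr]
        exact ⟨y, rfl⟩
      obtain ⟨x, hx⟩ := this
      exact ⟨x, hχ (by rw [hg3, hx])⟩
    obtain ⟨s, hs⟩ := Module.projective_lifting_property g3 LinearMap.id hg3s
    have hs' : ∀ y, g3 (s y) = y := fun y => LinearMap.congr_fun hs y
    have hcompl : IsCompl (LinearMap.ker g3) (LinearMap.range s) := by
      constructor
      · rw [Submodule.disjoint_def]
        rintro _ hx ⟨y, rfl⟩
        rw [LinearMap.mem_ker, hs'] at hx
        rw [hx, map_zero]
      · rw [codisjoint_iff, eq_top_iff]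
        intro x _
        refine Submodule.mem_sup.2 ⟨x - s (g3 x), ?_, s (g3 x), ⟨_, rfl⟩, by simp⟩
        rw [LinearMap.mem_ker, map_sub, hs', sub_self]
    have hnt : Nontrivial (rightIdeal R (H.e i' ⟨k, by omega⟩)) := (H.indec i' ⟨k, by omega⟩).1
    have hg3i : Function.Injective g3 := by
      rcases (H.indec i ⟨0, H.hn i⟩).2 _ _ hcompl with h0 | h0
      · exact LinearMap.ker_eq_bot.1 h0
      · exfalso
        obtain ⟨y, hy⟩ := exists_ne (0 : rightIdeal R (H.e i' ⟨k, hk.trans hj'⟩))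
        apply hy
        have : s y ∈ LinearMap.range s := ⟨y, rfl⟩
        rw [h0] at this
        rw [← hs' y, (Submodule.mem_bot _).1 this, map_zero]
    have hg2i : Function.Injective g2 := by
      intro x y hxy
      apply hg3i
      apply hχ
      rw [hg3, hg3, hxy]
    have heq : (⟨i, ⟨0, H.hn i⟩⟩ : Σ i : Fin H.m, Fin (H.n i)) = ⟨i', ⟨k, by omega⟩⟩ := by
      by_contra hne
      exact (H.basic _ _ hne).false (LinearEquiv.ofBijective g3 ⟨hg3i, hg3s⟩)
    obtain ⟨h1, h2⟩ := Sigma.mk.inj_iff.1 heq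
    subst h1
    have hk0 : k = 0 := by
      have := congrArg Fin.val (eq_of_heq h2)
      exact this.symm
    subst hk0
    apply H.radSub_ne i j hj
    have ha : radSub^[j] (⊤ : Submodule Rᵐᵒᵖ (H.top i)) = LinearMap.range φ := by
      apply Submodule.map_injective_of_injective (f := (H.top i).subtype) Subtype.val_injective
      rw [hr, map_radSub_iter _ Subtype.val_injective]
      simp
    have hb : Submodule.map g2 (LinearMap.range φ) = radSub^[j] (H.top i) := by
      rw [← ha, map_radSub_iter _ hg2i, Submodule.map_top, h,
        Function.iterate_zero, id]
    rw [← hb]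
    rintro _ ⟨_, ⟨y, rfl⟩, rfl⟩
    rw [hg2]
    have h5 : radSub^[H.n i] (H.top i) = radSub^[H.n i - j'] (LinearMap.range ψ) := by
      rw [hψr, ← Function.iterate_add_apply]
      congr 2
      omega
    rw [h5, ← Submodule.map_top, ← map_radSub_iter _ hψ]
    refine ⟨zm y, ?_, rfl⟩
    have h6 := hz' y
    have h7 : radSub^[H.n i - j'] (rightIdeal R (H.e i ⟨j', hj'⟩)) =
        Submodule.map (rightIdeal R (H.e i ⟨j', hj'⟩)).subtype (radSub^[H.n i - j'] ⊤) := by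
      rw [map_radSub_iter _ Subtype.val_injective]
      simp
    rw [h7] at h6
    obtain ⟨w, hw, hwy⟩ := h6
    have : w = zm y := Subtype.ext hwy
    rwa [← this]
  let e2 := LinearEquiv.ofInjective ψ hψ
  refine ⟨(Submodule.subtype _).comp (e2.symm.toLinearMap.comp
    (g2.codRestrict (LinearMap.range ψ) (fun x => key ⟨x, rfl⟩))), ?_⟩
  intro y
  have : e2.symm (g2.codRestrict (LinearMap.range ψ) (fun x => key ⟨x, rfl⟩) (φ y)) = zm y := by
    rw [LinearEquiv.symm_apply_eq]
    exact Subtype.ext (hg2 y)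
  exact congrArg Subtype.val this

end

theorem mul_mem_of_mem_I {z : R} (hz : z ∈ H.I) (q : Σ i : Fin H.m, Fin (H.n i)) :
    H.e q.1 q.2 * z ∈ radSub^[H.n q.1 - q.2.val] (rightIdeal R (H.e q.1 q.2)) := by
  unfold HaradaData.I at hz
  induction hz using Submodule.iSup_induction' with
  | mem p z hz =>
    have h1 := (mem_rightIdeal_idem (H.idem p.1 p.2)).1 (radSub_iter_le _ _ hz)
    by_cases h : q = p
    · subst h
      rwa [h1]
    · rw [← h1, ← mul_assoc, H.orth q p h, zero_mul]
      exact Submodule.zero_mem _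
  | zero => rw [mul_zero]; exact Submodule.zero_mem _
  | add x y _ _ hx hy => rw [mul_add]; exact Submodule.add_mem _ hx hy

end HaradaData

theorem smulSub_eq {S : Type} [Ring S] (π : R →+* S) (I : Submodule Rᵐᵒᵖ R)
    (hker : ∀ x : R, π x = 0 ↔ x ∈ I) (T : Type) [AddCommGroup T] [Module Rᵐᵒᵖ T] :
    smulSub I T = (RingHom.ker (RingHom.op π)) • (⊤ : Submodule Rᵐᵒᵖ T) := by
  have hm : ∀ a : Rᵐᵒᵖ, a ∈ RingHom.ker (RingHom.op π) ↔ unop a ∈ I := by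
    intro a
    rw [← hker, RingHom.mem_ker]
    exact op_eq_zero_iff (π (unop a))
  apply le_antisymm
  · refine Submodule.span_le.2 ?_
    rintro _ ⟨t, r, hr, rfl⟩
    exact Submodule.smul_mem_smul ((hm _).2 hr) trivial
  · rw [Submodule.smul_le]
    intro a ha t _
    exact Submodule.subset_span ⟨t, unop a, (hm a).1 ha, rfl⟩

theorem harada_main [IsNoetherian Rᵐᵒᵖ R] [IsArtinian Rᵐᵒᵖ R] (H : HaradaData R)
    (S : Type) [Ring S] (π : R →+* S) (hsurj : Function.Surjective π)
    (hker : ∀ x : R, π x = 0 ↔ x ∈ H.I)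
    (T : Type) [AddCommGroup T] [Module Rᵐᵒᵖ T]
    (hfin : Module.Finite Rᵐᵒᵖ T) (hpd : PdLeOne Rᵐᵒᵖ T)
    (FT : Type) [AddCommGroup FT] [Module Sᵐᵒᵖ FT]
    (e : RestrictRight π FT ≃ₗ[Rᵐᵒᵖ] (T ⧸ smulSub H.I T)) :
    Ext1Zero Rᵐᵒᵖ T T ↔ Ext1Zero Sᵐᵒᵖ FT FT := by
  have hnoeth : IsNoetherianRing Rᵐᵒᵖ := isNoetherian_of_linearEquiv (opEq R).symm
  have hφ : ∀ p : Σ i : Fin H.m, Fin (H.n i), ∃ φ : rightIdeal R (H.e p.1 p.2) →ₗ[Rᵐᵒᵖ] H.top p.1,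
      Function.Injective φ ∧ Submodule.map (H.top p.1).subtype (LinearMap.range φ) =
        radSub^[p.2.val] (H.top p.1) := by
    intro p
    obtain ⟨φ, h1, h2⟩ := H.exists_emb p.1 p.2.val p.2.isLt
    refine ⟨φ.codRestrict _ (fun x => radSub_iter_le _ p.2.val (h2 ▸ ⟨x, rfl⟩)), ?_, ?_⟩
    · intro x y hxy
      exact h1 (congrArg Subtype.val hxy)
    · rw [← LinearMap.range_comp]
      exact h2
  choose φ hφi hφr using hφ
  let lm : ∀ p : Σ i : Fin H.m, Fin (H.n i), R →ₗ[Rᵐᵒᵖ] rightIdeal R (H.e p.1 p.2) := fun p =>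
    (lmul (H.e p.1 p.2)).codRestrict _ (fun y => mem_rightIdeal.2 ⟨y, rfl⟩)
  let jR : R →ₗ[Rᵐᵒᵖ] (∀ p : Σ i : Fin H.m, Fin (H.n i), H.top p.1) :=
    LinearMap.pi fun p => (φ p).comp (lm p)
  have hInj : ∀ p : Σ i : Fin H.m, Fin (H.n i), Module.Injective Rᵐᵒᵖ (H.top p.1) :=
    fun p => H.inj p.1
  have hE : Module.Injective Rᵐᵒᵖ (∀ p : Σ i : Fin H.m, Fin (H.n i), H.top p.1) :=
    inferInstance
  have hone : ∀ r : R, ∑ p : Σ i : Fin H.m, Fin (H.n i), H.e p.1 p.2 * r = r := by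
    intro r
    rw [← Finset.sum_mul, H.sum_eq_one, one_mul]
  have hop : ∀ a : Rᵐᵒᵖ, RingHom.op π a = 0 ↔ unop a ∈ H.I := by
    intro a
    rw [← hker]
    exact op_eq_zero_iff (π (unop a))
  have hC : ∀ (i : Fin H.m) (y : H.top i),
      y ∈ RingHom.ker (RingHom.op π) • (⊤ : Submodule Rᵐᵒᵖ (H.top i)) →
      (y : R) ∈ radSub^[H.n i] (H.top i) := by
    intro i y hy
    have : RingHom.ker (RingHom.op π) • (⊤ : Submodule Rᵐᵒᵖ (H.top i)) ≤
        Submodule.comap (H.top i).subtype (radSub^[H.n i] (H.top i)) := by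
      rw [Submodule.smul_le]
      intro a ha w _
      have h1 : (w : R) * unop a ∈ H.I := by
        rw [← hker, map_mul, (hker _).2 ((hop a).1 ha), mul_zero]
      have h2 := H.mul_mem_of_mem_I h1 ⟨i, ⟨0, H.hn i⟩⟩
      rw [← mul_assoc, (mem_rightIdeal_idem (H.idem _ _)).1 w.2] at h2
      exact h2
    exact this hy
  refine generic_main Rᵐᵒᵖ Sᵐᵒᵖ (RingHom.op π) ?_ _ hE (jR.comp (opEq R).toLinearMap) ?_ ?_ T hpd FT
    { toFun := fun t => (e.symm (Submodule.Quotient.mk t) : FT)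
      map_add' := fun x y => by
        rw [Submodule.Quotient.mk_add, map_add]; rfl
      map_smul' := fun a x => by
        rw [Submodule.Quotient.mk_smul, map_smul]; rfl } ?_ ?_
  · intro b
    obtain ⟨r, hr⟩ := hsurj (unop b)
    exact ⟨op r, congrArg op hr⟩
  · intro a ha
    rw [hop, ← hone (unop a)]
    refine Submodule.sum_mem _ fun p _ => ?_
    have h1 := map_mem_smul_top _ (LinearMap.proj p :
      (∀ p : Σ i : Fin H.m, Fin (H.n i), H.top p.1) →ₗ[Rᵐᵒᵖ] H.top p.1) ha
    have h2 := hC _ _ h1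
    change ((φ p (lm p (unop a)) : H.top p.1) : R) ∈ _ at h2
    have hlt := p.2.isLt
    have h3 : radSub^[H.n p.1] (H.top p.1) = Submodule.map ((H.top p.1).subtype.comp (φ p))
        (radSub^[H.n p.1 - p.2.val] ⊤) := by
      rw [map_radSub_iter _ (Subtype.val_injective.comp (hφi p)), Submodule.map_top,
        LinearMap.range_comp, hφr, ← Function.iterate_add_apply]
      congr 2
      omega
    rw [h3] at h2
    obtain ⟨w, hw, hwy⟩ := h2
    have h4 : w = lm p (unop a) := hφi p (Subtype.ext hwy)
    have h5 : (w : R) ∈ radSub^[H.n p.1 - p.2.val] (rightIdeal R (H.e p.1 p.2)) := by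
      have : (w : R) ∈ Submodule.map (rightIdeal R (H.e p.1 p.2)).subtype
          (radSub^[H.n p.1 - p.2.val] ⊤) := ⟨w, hw, rfl⟩
      rw [map_radSub_iter _ Subtype.val_injective] at this
      simpa using this
    rw [h4] at h5
    exact (le_iSup (fun p : Σ i : Fin H.m, Fin (H.n i) =>
      radSub^[H.n p.1 - p.2.val] (rightIdeal R (H.e p.1 p.2))) p) h5
  · intro x hx
    rw [hop] at hx
    have hg : ∀ p q : Σ i : Fin H.m, Fin (H.n i), ∃ g : H.top p.1 →ₗ[Rᵐᵒᵖ] R,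
        ∀ y, g (φ p y) = H.e q.1 q.2 * unop x * y := fun p q =>
      H.core p.1 p.2.val p.2.isLt (φ p) (hφi p) (hφr p) q.1 q.2.val q.2.isLt _
        (H.mul_mem_of_mem_I hx q)
    choose g hg using hg
    refine ⟨(opEq R).symm.toLinearMap.comp (∑ p, ∑ q, (g p q).comp (LinearMap.proj p)), ?_⟩
    intro a
    apply unop_injective
    have h1 : ∀ p q, g p q (φ p (lm p (unop a))) =
        H.e q.1 q.2 * (unop x * (H.e p.1 p.2 * unop a)) := by
      intro p q
      rw [hg, mul_assoc]
      rfl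
    have h2 : (∑ p, ∑ q, (g p q).comp (LinearMap.proj p)) (jR (unop a)) =
        ∑ p, ∑ q, g p q (φ p (lm p (unop a))) := by
      simp only [LinearMap.sum_apply]
      rfl
    refine h2.trans ?_
    simp only [h1, hone, ← Finset.mul_sum]
    rfl
  · intro y
    obtain ⟨t, ht⟩ := Submodule.Quotient.mk_surjective _ (e (y : RestrictRight π FT))
    refine ⟨t, ?_⟩
    change e.symm (Submodule.Quotient.mk t) = _
    rw [ht]
    exact e.symm_apply_apply y
  · intro t
    rw [← smulSub_eq π H.I hker T, ← Submodule.Quotient.mk_eq_zero]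
    exact e.symm.map_eq_zero_iff

/-- Proposition 4.5.  For every finitely generated right `R`-module `T` of
projective dimension at most one, `Ext¹_R(T,T) = 0` iff `Ext¹_{R̄}(F T, F T) = 0`, where
`R̄ = R/I` is presented by a surjective ring homomorphism `π : R → S` with kernel `I` and
`F T = T ⊗_R R̄ = T/T·I` with its natural right `S`-module structure. -/
theorem statement17 (K R : Type) [Field K] [IsAlgClosed K] [Ring R] [Algebra K R]
    [FiniteDimensional K R] (H : HaradaData R)
    (S : Type) [Ring S] (π : R →+* S) (hsurj : Function.Surjective π)
    (hker : ∀ x : R, π x = 0 ↔ x ∈ H.I)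
    (T : Type) [AddCommGroup T] [Module Rᵐᵒᵖ T]
    (hfin : Module.Finite Rᵐᵒᵖ T) (hpd : PdLeOne Rᵐᵒᵖ T)
    (FT : ModuleCat.{0} Sᵐᵒᵖ)
    (hFT : Nonempty (RestrictRight π ↥FT ≃ₗ[Rᵐᵒᵖ] (T ⧸ smulSub H.I T))) :
    Ext1Zero Rᵐᵒᵖ T T ↔ Ext1Zero Sᵐᵒᵖ ↥FT ↥FT := by
  have htower : IsScalarTower K Rᵐᵒᵖ R := ⟨fun k a x => by
    change x * (k • unop a) = k • (x * unop a)
    rw [mul_smul_comm]⟩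
  have h1 : IsNoetherian Rᵐᵒᵖ R := isNoetherian_of_tower K inferInstance
  have h2 : IsArtinian Rᵐᵒᵖ R := isArtinian_of_tower K inferInstance
  obtain ⟨e⟩ := hFT
  exact harada_main H S π hsurj hker T hfin hpd FT e
end

section
/- Let R be a basic left Harada algebra as below, let I be the two-sided ideal I := ⊕_{i,j} rad^{n_i-j+1}(e_{ij}R), set R̄ := R/I, and let F(T) := T ⊗_R R̄. Then for every basic tilting right R-module T, F(T) is a basic tilting right R̄-module, and T ↦ F(T) induces a bijection from the set of isomorphism classes of basic tilting right R-modules onto the set of isomorphism classes of basic tilting right R̄-modules. -/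
/-!
Common setup.  `K` is an algebraically closed field and `R` a finite-dimensional associative
unital `K`-algebra.  Right `R`-modules are formalized as modules over the opposite ring `Rᵐᵒᵖ`
(so that `MulOpposite.op r • x = x * r`).
-/

open MulOpposite

variable {R : Type} [Ring R]

namespace Hrd

section Red

variable {A B : Type} [Ring A] [Ring B]

/-- The submodule `I • M` where `I` is the kernel of `q`. -/
def IM (q : A →+* B) (M : Type) [AddCommGroup M] [Module A M] : Submodule A M :=
  RingHom.ker q • (⊤ : Submodule A M)

variable {q : A →+* B}
variable {M N X Y : Type} [AddCommGroup M] [Module A M] [AddCommGroup N] [Module A N]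
  [AddCommGroup X] [Module A X] [AddCommGroup Y] [Module A Y]
variable {Z Z' L : Type} [AddCommGroup Z] [Module B Z] [AddCommGroup Z'] [Module B Z']
  [AddCommGroup L] [Module B L]

theorem smul_mem_IM {a : A} (ha : q a = 0) (m : M) : a • m ∈ IM q M :=
  Submodule.smul_mem_smul (by simpa [RingHom.mem_ker] using ha) Submodule.mem_top

theorem IM_le {P : Submodule A M} (h : ∀ (a : A) (m : M), q a = 0 → a • m ∈ P) : IM q M ≤ P :=
  Submodule.smul_le.2 fun a ha m _ => h a m (by simpa [RingHom.mem_ker] using ha)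

theorem map_mem_IM (f : M →ₗ[A] N) {x : M} (hx : x ∈ IM q M) : f x ∈ IM q N := by
  have : IM q M ≤ (IM q N).comap f := IM_le fun a m ha => by
    simpa using smul_mem_IM ha (f m)
  exact this hx

theorem exists_IM_preimage (f : M →ₗ[A] N) (hf : Function.Surjective f) {y : N}
    (hy : y ∈ IM q N) : ∃ x ∈ IM q M, f x = y := by
  have : IM q N ≤ (IM q M).map f := IM_le fun a n ha => by
    obtain ⟨m, rfl⟩ := hf n
    exact ⟨a • m, smul_mem_IM ha m, by simp⟩
  exact this hy

theorem semi_eq_zero (p : M →ₛₗ[q] Z) {x : M} (hx : x ∈ IM q M) : p x = 0 := by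
  have : IM q M ≤ LinearMap.ker p := IM_le fun a m ha => by simp [ha]
  exact this hx

theorem mem_IM_pi {ι : Type} [Finite ι] {V : ι → Type} [∀ i, AddCommGroup (V i)]
    [∀ i, Module A (V i)] {x : ∀ i, V i} (h : ∀ i, x i ∈ IM q (V i)) : x ∈ IM q (∀ i, V i) := by
  classical
  cases nonempty_fintype ι
  have : x = ∑ i, LinearMap.single A V i (x i) := by
    simpa using (LinearMap.sum_single_apply (v := x)).symm
  rw [this]
  exact Submodule.sum_mem _ fun i _ => map_mem_IM _ (h i)

theorem mem_IM_prod {x : M × N} (h1 : x.1 ∈ IM q M) (h2 : x.2 ∈ IM q N) : x ∈ IM q (M × N) := by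
  have : x = LinearMap.inl A M N x.1 + LinearMap.inr A M N x.2 := by ext <;> simp
  rw [this]
  exact add_mem (map_mem_IM _ h1) (map_mem_IM _ h2)

/-- `p : M → Z` exhibits `Z` as `M / I M`. -/
structure IsRed (p : M →ₛₗ[q] Z) : Prop where
  surj : Function.Surjective p
  ker : ∀ x, p x = 0 → x ∈ IM q M

/-- factor a semilinear map through a surjective semilinear map -/
theorem exists_factor {C D E G : Type} [Ring C] [Ring E] {s : A →+* C} {t : A →+* E} {u : C →+* E}
    [AddCommGroup D] [Module C D] [AddCommGroup G] [Module E G]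
    [RingHomCompTriple s u t] (hs : Function.Surjective s)
    (p : M →ₛₗ[s] D) (hp : Function.Surjective p) (g : M →ₛₗ[t] G)
    (h : ∀ x, p x = 0 → g x = 0) : ∃ k : D →ₛₗ[u] G, ∀ x, k (p x) = g x := by
  have hwd : ∀ x y, p x = p y → g x = g y := fun x y hxy => by
    have := h (x - y) (by simp [hxy])
    simpa [sub_eq_zero] using this
  choose r hr using hp
  refine ⟨{ toFun := fun d => g (r d), map_add' := ?_, map_smul' := ?_ }, ?_⟩
  · intro d d'
    rw [← map_add]
    exact hwd _ _ (by simp [hr])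
  · intro c d
    obtain ⟨a, rfl⟩ := hs c
    have : u (s a) = t a := RingHomCompTriple.comp_apply
    rw [this, ← map_smulₛₗ]
    exact hwd _ _ (by simp [hr])
  · intro x
    exact hwd _ _ (by simp [hr])

theorem IsRed.exists_desc {p : M →ₛₗ[q] Z} (hq : Function.Surjective q) (hp : IsRed p)
    (g : M →ₛₗ[q] L) : ∃ k : Z →ₗ[B] L, ∀ x, k (p x) = g x :=
  exists_factor hq p hp.surj g fun x hx => semi_eq_zero g (hp.ker x hx)

/-- factor through a surjective linear map -/
theorem exists_linear_factor (p : M →ₗ[A] N) (hp : Function.Surjective p) (g : M →ₗ[A] X)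
    (h : ∀ x, p x = 0 → g x = 0) : ∃ k : N →ₗ[A] X, ∀ x, k (p x) = g x :=
  exists_factor (u := RingHom.id A) Function.surjective_id p hp g h

theorem exists_semi_factor (p : M →ₗ[A] N) (hp : Function.Surjective p) (g : M →ₛₗ[q] Z)
    (h : ∀ x, p x = 0 → g x = 0) : ∃ k : N →ₛₗ[q] Z, ∀ x, k (p x) = g x :=
  exists_factor (u := q) Function.surjective_id p hp g h

theorem IsRed.map (hq : Function.Surjective q) {p : M →ₛₗ[q] Z} {p' : N →ₛₗ[q] Z'}
    (hp : IsRed p) (f : M →ₗ[A] N) : ∃ k : Z →ₗ[B] Z', ∀ x, k (p x) = p' (f x) :=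
  hp.exists_desc hq (p'.comp f)

theorem IsRed.unique (hq : Function.Surjective q) {p : M →ₛₗ[q] Z} {p' : N →ₛₗ[q] Z'}
    (hp : IsRed p) (hp' : IsRed p') (e : M ≃ₗ[A] N) : Nonempty (Z ≃ₗ[B] Z') := by
  obtain ⟨k, hk⟩ := hp.map (p' := p') hq e.toLinearMap
  obtain ⟨l, hl⟩ := hp'.map (p' := p) hq e.symm.toLinearMap
  refine ⟨LinearEquiv.ofLinearMap k l ?_ ?_⟩
  · ext z; obtain ⟨x, rfl⟩ := hp'.surj z; simp [hl, hk]
  · ext z; obtain ⟨x, rfl⟩ := hp.surj z; simp [hl, hk]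

theorem IsRed.comp_equiv {p : M →ₛₗ[q] Z} (hp : IsRed p) (e : Z ≃ₗ[B] Z') :
    IsRed (e.toLinearMap.comp p) :=
  ⟨e.surjective.comp hp.surj, fun x hx => hp.ker x (by simpa using hx)⟩

theorem isRed_self (hq : Function.Surjective q) : IsRed (q.toSemilinearMap) := by
  refine ⟨hq, fun x hx => ?_⟩
  have := smul_mem_IM (q := q) (a := x) hx (1 : A)
  simpa using this

/-- product of semilinear maps -/
def piSemi {ι : Type} {V : ι → Type} {W : ι → Type} [∀ i, AddCommGroup (V i)]
    [∀ i, Module A (V i)] [∀ i, AddCommGroup (W i)] [∀ i, Module B (W i)]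
    (p : ∀ i, V i →ₛₗ[q] W i) : (∀ i, V i) →ₛₗ[q] (∀ i, W i) where
  toFun x i := p i (x i)
  map_add' x y := by ext; simp
  map_smul' a x := by ext; simp

theorem isRed_pi {ι : Type} [Finite ι] {V : ι → Type} {W : ι → Type} [∀ i, AddCommGroup (V i)]
    [∀ i, Module A (V i)] [∀ i, AddCommGroup (W i)] [∀ i, Module B (W i)]
    (p : ∀ i, V i →ₛₗ[q] W i) (hp : ∀ i, IsRed (p i)) : IsRed (piSemi p) := by
  refine ⟨fun z => ?_, fun x hx => mem_IM_pi fun i => (hp i).ker _ (congrFun hx i)⟩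
  choose x hx using fun i => (hp i).surj (z i)
  exact ⟨x, funext hx⟩

/-- Existence of reductions. -/
theorem exists_red (hq : Function.Surjective q) (M : Type) [AddCommGroup M] [Module A M] :
    ∃ (Z : ModuleCat.{0} B) (p : M →ₛₗ[q] Z), IsRed p := by
  let Q := M ⧸ IM q M
  have hkill : ∀ (a : A) (x : Q), q a = 0 → a • x = 0 := by
    intro a x ha
    obtain ⟨m, rfl⟩ := Submodule.Quotient.mk_surjective _ x
    rw [← Submodule.Quotient.mk_smul, Submodule.Quotient.mk_eq_zero]
    exact smul_mem_IM ha m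
  let sm : SMul B Q := ⟨fun b x => (hq b).choose • x⟩
  have hsm : ∀ (a : A) (x : Q), q a • x = a • x := by
    intro a x
    have h1 : q (hq (q a)).choose = q a := (hq (q a)).choose_spec
    have := hkill ((hq (q a)).choose - a) x (by simp [h1])
    rw [sub_smul, sub_eq_zero] at this
    exact this
  let : Module B Q := Function.Surjective.moduleLeft q hq hsm
  refine ⟨ModuleCat.of B Q, { toFun := (IM q M).mkQ, map_add' := fun x y => map_add _ x y, map_smul' := ?_ }, ?_, ?_⟩
  · intro a x
    rw [map_smul]
    exact (hsm a _).symm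
  · exact (IM q M).mkQ_surjective
  · intro x hx
    exact (Submodule.Quotient.mk_eq_zero _).1 hx

/-- lifting from a projective along a surjective semilinear map -/
theorem proj_lift_semi [Module.Projective A X] (f : M →ₛₗ[q] Z) (hf : Function.Surjective f)
    (g : X →ₛₗ[q] Z) : ∃ l : X →ₗ[A] M, ∀ x, f (l x) = g x := by
  let : Module A Z := Module.compHom Z q
  let f' : M →ₗ[A] Z := { toFun := f, map_add' := map_add f, map_smul' := fun a x => map_smulₛₗ f a x }
  let g' : X →ₗ[A] Z := { toFun := g, map_add' := map_add g, map_smul' := fun a x => map_smulₛₗ g a x }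
  obtain ⟨l, hl⟩ := Module.projective_lifting_property f' g' hf
  exact ⟨l, fun x => LinearMap.congr_fun hl x⟩

theorem proj_lift_lin [Module.Projective A X] (f : Z' →ₗ[B] Z) (hf : Function.Surjective f)
    (g : X →ₛₗ[q] Z) : ∃ l : X →ₛₗ[q] Z', ∀ x, f (l x) = g x := by
  let : Module A Z := Module.compHom Z q
  let : Module A Z' := Module.compHom Z' q
  let f' : Z' →ₗ[A] Z := { toFun := f, map_add' := map_add f, map_smul' := fun a x => map_smul f (q a) x }
  let g' : X →ₗ[A] Z := { toFun := g, map_add' := map_add g, map_smul' := fun a x => map_smulₛₗ g a x }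
  obtain ⟨l, hl⟩ := Module.projective_lifting_property f' g' hf
  exact ⟨{ toFun := l, map_add' := map_add l, map_smul' := fun a x => map_smul l a x },
    fun x => LinearMap.congr_fun hl x⟩

theorem proj_lift [Module.Projective A X] (f : M →ₗ[A] N) (hf : Function.Surjective f)
    (g : X →ₗ[A] N) : ∃ l : X →ₗ[A] M, ∀ x, f (l x) = g x := by
  obtain ⟨l, hl⟩ := Module.projective_lifting_property f g hf
  exact ⟨l, fun x => LinearMap.congr_fun hl x⟩

/-- lifting with values in `IM` -/
theorem proj_lift_IM [Module.Projective A X] (f : M →ₗ[A] N) (hf : Function.Surjective f)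
    (g : X →ₗ[A] N) (hg : ∀ x, g x ∈ IM q N) :
    ∃ l : X →ₗ[A] M, (∀ x, f (l x) = g x) ∧ ∀ x, l x ∈ IM q M := by
  let f' : IM q M →ₗ[A] IM q N := f.restrict fun x hx => map_mem_IM f hx
  have hf' : Function.Surjective f' := by
    rintro ⟨y, hy⟩
    obtain ⟨x, hx, rfl⟩ := exists_IM_preimage f hf hy
    exact ⟨⟨x, hx⟩, rfl⟩
  obtain ⟨l, hl⟩ := proj_lift f' hf' (g.codRestrict _ hg)
  refine ⟨(IM q M).subtype.comp l, fun x => ?_, fun x => (l x).2⟩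
  exact congrArg Subtype.val (hl x)

theorem IsRed.projective (hq : Function.Surjective q) [Module.Projective A X] {p : X →ₛₗ[q] Z}
    (hp : IsRed p) : Module.Projective B Z := by
  refine Module.Projective.of_lifting_property'' fun f hf => ?_
  obtain ⟨l, hl⟩ := proj_lift_lin f hf p
  obtain ⟨k, hk⟩ := hp.exists_desc hq l
  refine ⟨k, ?_⟩
  ext z
  obtain ⟨x, rfl⟩ := hp.surj z
  simp [hk, hl]

theorem IsRed.finite (hq : Function.Surjective q) [Module.Finite A X] {p : X →ₛₗ[q] Z}
    (hp : IsRed p) : Module.Finite B Z :=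
  haveI : RingHomSurjective q := ⟨hq⟩
  Module.Finite.of_surjective p hp.surj

end Red

end Hrd

namespace Hrd

section PD

variable {A : Type} [Ring A]
variable {M N X Y P : Type} [AddCommGroup M] [Module A M] [AddCommGroup N] [Module A N]
  [AddCommGroup X] [Module A X] [AddCommGroup Y] [Module A Y] [AddCommGroup P] [Module A P]

theorem PdLeOne.ker_projective (h : PdLeOne A X) [Module.Projective A P] (g : P →ₗ[A] X)
    (hg : Function.Surjective g) : Module.Projective A (LinearMap.ker g) := by
  obtain ⟨P', f, hP', hf, hker⟩ := h
  obtain ⟨a, ha⟩ := proj_lift f hf g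
  obtain ⟨b, hb⟩ := proj_lift g hg f
  let i : LinearMap.ker g →ₗ[A] (LinearMap.ker f × P) :=
    LinearMap.prod (a.restrict (q := LinearMap.ker f) fun x hx => by
      simpa [ha] using hx) (LinearMap.ker g).subtype
  let s : (LinearMap.ker f × P) →ₗ[A] LinearMap.ker g :=
    LinearMap.coprod (b.restrict (q := LinearMap.ker g) fun x hx => by
      simpa [hb] using hx) (LinearMap.codRestrict _ (LinearMap.id - b.comp a) fun z => by
        simp [ha, hb])
  refine Module.Projective.of_split i s ?_
  ext x
  simp [i, s]

theorem pdLeOne_of_surj [Module.Projective A P] (g : P →ₗ[A] X) (hg : Function.Surjective g)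
    (h : Module.Projective A (LinearMap.ker g)) : PdLeOne A X :=
  ⟨ModuleCat.of A P, g, by assumption, hg, h⟩

theorem pdLeOne_equiv (e : X ≃ₗ[A] Y) (h : PdLeOne A X) : PdLeOne A Y := by
  obtain ⟨P', f, hP', hf, hker⟩ := h
  refine ⟨P', e.toLinearMap.comp f, hP', e.surjective.comp hf, ?_⟩
  rwa [LinearMap.ker_comp_of_ker_eq_bot _ (LinearEquiv.ker e)]

theorem exists_proj_cover (X : Type) [AddCommGroup X] [Module A X] :
    ∃ f : (X →₀ A) →ₗ[A] X, Function.Surjective f :=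
  ⟨Finsupp.linearCombination A id, Finsupp.linearCombination_id_surjective A X⟩

theorem pdLeOne_retract (s : X →ₗ[A] M) (r : M →ₗ[A] X) (hrs : ∀ x, r (s x) = x)
    (h : PdLeOne A M) : PdLeOne A X := by
  obtain ⟨g1, hg1⟩ := exists_proj_cover (A := A) X
  obtain ⟨g2, hg2⟩ := exists_proj_cover (A := A) (LinearMap.ker r)
  let g : ((X →₀ A) × (LinearMap.ker r →₀ A)) →ₗ[A] M :=
    LinearMap.coprod (s.comp g1) ((LinearMap.ker r).subtype.comp g2)
  have hg : Function.Surjective g := by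
    intro m
    obtain ⟨a, ha⟩ := hg1 (r m)
    obtain ⟨b, hb⟩ := hg2 ⟨m - s (r m), by simp [hrs]⟩
    exact ⟨(a, b), by simp [g, ha, hb]⟩
  have := PdLeOne.ker_projective h g hg
  refine pdLeOne_of_surj g1 hg1 ?_
  let i : LinearMap.ker g1 →ₗ[A] LinearMap.ker g :=
    (LinearMap.inl A (X →₀ A) (LinearMap.ker r →₀ A)).restrict fun x hx => by
      simp only [LinearMap.mem_ker] at hx ⊢; simp [g, hx]
  let t : LinearMap.ker g →ₗ[A] LinearMap.ker g1 :=
    (LinearMap.fst A (X →₀ A) (LinearMap.ker r →₀ A)).restrict fun x hx => by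
      simp only [LinearMap.mem_ker] at hx ⊢
      have := congrArg r hx
      simpa [g, hrs] using this
  refine Module.Projective.of_split i t ?_
  ext x
  simp [i, t]

theorem pi_projective {ι : Type} [Finite ι] {V : ι → Type} [∀ i, AddCommGroup (V i)]
    [∀ i, Module A (V i)] [∀ i, Module.Projective A (V i)] : Module.Projective A (∀ i, V i) := by
  classical
  cases nonempty_fintype ι
  exact Module.Projective.of_equiv' (DFinsupp.linearEquivFunOnFintype (R := A) (M := V))

theorem pdLeOne_pi {ι : Type} [Finite ι] {V : ι → Type} [∀ i, AddCommGroup (V i)]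
    [∀ i, Module A (V i)] (h : ∀ i, PdLeOne A (V i)) : PdLeOne A (∀ i, V i) := by
  choose P f hP hf hker using h
  let g : (∀ i, P i) →ₗ[A] (∀ i, V i) := LinearMap.pi fun i => (f i).comp (LinearMap.proj i)
  have : Module.Projective A (∀ i, P i) := pi_projective
  have h2 : Module.Projective A (∀ i, LinearMap.ker (f i)) := pi_projective
  refine pdLeOne_of_surj g (fun z => ?_) ?_
  · choose x hx using fun i => hf i (z i)
    exact ⟨x, funext hx⟩
  · let i : LinearMap.ker g →ₗ[A] (∀ i, LinearMap.ker (f i)) := LinearMap.pi fun i =>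
      (LinearMap.proj (R := A) (φ := fun i => P i) i).restrict fun x hx => congrFun hx i
    let s : (∀ i, LinearMap.ker (f i)) →ₗ[A] LinearMap.ker g :=
      LinearMap.codRestrict _ (LinearMap.pi fun i => (LinearMap.ker (f i)).subtype.comp
        (LinearMap.proj i)) fun x => by
          ext j; exact (x j).2
    refine Module.Projective.of_split i s ?_
    ext x
    rfl

theorem pdLeOne_inAdd (h : PdLeOne A M) (hX : InAdd A M X) : PdLeOne A X := by
  obtain ⟨k, f, g, hgf⟩ := hX
  exact pdLeOne_retract f g (fun x => LinearMap.congr_fun hgf x) (pdLeOne_pi fun _ => h)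

theorem finite_inAdd [Module.Finite A M] (hX : InAdd A M X) : Module.Finite A X := by
  obtain ⟨k, f, g, hgf⟩ := hX
  exact Module.Finite.of_surjective g fun x => ⟨f x, LinearMap.congr_fun hgf x⟩

/-- Ext vanishing through a projective presentation. -/
theorem ext1Zero_iff [Module.Projective A P] (g : P →ₗ[A] X) (hg : Function.Surjective g) :
    Ext1Zero A X Y ↔
      ∀ θ : LinearMap.ker g →ₗ[A] Y, ∃ θ' : P →ₗ[A] Y, ∀ x : LinearMap.ker g, θ' x = θ x := by
  constructor
  · intro h θ
    let D : Submodule A (Y × P) :=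
      LinearMap.range (LinearMap.prod θ (-(LinearMap.ker g).subtype))
    let i : Y →ₗ[A] ((Y × P) ⧸ D) := D.mkQ.comp (LinearMap.inl A Y P)
    let g' : (Y × P) →ₗ[A] X := g.comp (LinearMap.snd A Y P)
    have hD : D ≤ LinearMap.ker g' := by
      rintro _ ⟨x, rfl⟩
      simp [g']
    let p : ((Y × P) ⧸ D) →ₗ[A] X := D.liftQ g' hD
    have hi : Function.Injective i := by
      rw [injective_iff_map_eq_zero]
      intro y hy
      have : (y, (0 : P)) ∈ D := (Submodule.Quotient.mk_eq_zero _).1 hy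
      obtain ⟨x, hx⟩ := this
      have h2 := congrArg Prod.snd hx
      have h1 := congrArg Prod.fst hx
      simp at h1 h2
      rw [← h1, h2, map_zero]
    have hp : Function.Surjective p := by
      intro x
      obtain ⟨y, hy⟩ := hg x
      exact ⟨D.mkQ (0, y), by simp [p, g', hy]⟩
    have hex : LinearMap.range i = LinearMap.ker p := by
      apply le_antisymm
      · rintro _ ⟨y, rfl⟩
        simp [p, i, g']
      · intro z hz
        obtain ⟨⟨y, x⟩, rfl⟩ := D.mkQ_surjective z
        have hx : g x = 0 := by simpa [p, g'] using hz
        refine ⟨y + θ ⟨x, hx⟩, ?_⟩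
        rw [← sub_eq_zero]
        simp only [i, LinearMap.comp_apply, ← map_sub]
        refine (Submodule.Quotient.mk_eq_zero _).2 ⟨⟨x, hx⟩, ?_⟩
        simp
    obtain ⟨s, hs⟩ := h (ModuleCat.of A ((Y × P) ⧸ D)) i p hi hp hex
    have hs' : ∀ x, p (s x) = x := fun x => LinearMap.congr_fun hs x
    let j : P →ₗ[A] ((Y × P) ⧸ D) := D.mkQ.comp (LinearMap.inr A Y P)
    let d : P →ₗ[A] ((Y × P) ⧸ D) := j - s.comp (p.comp j)
    have hd : ∀ x, d x ∈ LinearMap.range i := by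
      intro x
      rw [hex]
      simp [d, hs']
    let e := LinearEquiv.ofInjective i hi
    refine ⟨e.symm.toLinearMap.comp (d.codRestrict _ hd), fun x => ?_⟩
    simp only [LinearMap.comp_apply, LinearEquiv.coe_coe]
    rw [LinearEquiv.symm_apply_eq]
    apply Subtype.ext
    simp only [LinearMap.codRestrict_apply, e, LinearEquiv.ofInjective_apply]
    have h0 : p (j x) = 0 := by simp [p, j, g']
    have hdx : d x = j x := by
      change j x - s (p (j x)) = j x
      rw [h0, map_zero, sub_zero]
    rw [hdx, ← sub_eq_zero]
    simp only [j, i, LinearMap.comp_apply, ← map_sub]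
    refine (Submodule.Quotient.mk_eq_zero _).2 ⟨-x, ?_⟩
    simp
  · intro h E i p hi hp hex
    obtain ⟨l, hl⟩ := proj_lift p hp g
    let e := LinearEquiv.ofInjective i hi
    let θ : LinearMap.ker g →ₗ[A] Y := e.symm.toLinearMap.comp
      (LinearMap.codRestrict (LinearMap.range i) (l.comp (LinearMap.ker g).subtype) fun x => by
        rw [hex]; simp [hl])
    obtain ⟨θ', hθ⟩ := h θ
    have hθi : ∀ x : LinearMap.ker g, i (θ x) = l x := by
      intro x
      have : e (θ x) = ⟨l x, by rw [hex]; simp [hl]⟩ := by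
        simp only [θ, LinearMap.comp_apply, LinearEquiv.coe_coe, LinearEquiv.apply_symm_apply]
        rfl
      exact congrArg Subtype.val this
    obtain ⟨s, hs⟩ := exists_linear_factor g hg (l - i.comp θ') fun x hx => by
      have := hθ ⟨x, hx⟩
      simp only [LinearMap.sub_apply, LinearMap.comp_apply]
      simp only at this
      rw [this, hθi, sub_self]
    refine ⟨s, ?_⟩
    ext x
    obtain ⟨y, rfl⟩ := hg x
    have hpi : ∀ y, p (i y) = 0 := fun y => by
      have : i y ∈ LinearMap.ker p := hex ▸ ⟨y, rfl⟩
      exact this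
    simp [hs, hl, hpi]

/-- InAdd closure properties -/
theorem inAdd_retract (s : X →ₗ[A] Y) (r : Y →ₗ[A] X) (hrs : ∀ x, r (s x) = x)
    (h : InAdd A M Y) : InAdd A M X := by
  obtain ⟨k, f, g, hgf⟩ := h
  refine ⟨k, f.comp s, r.comp g, ?_⟩
  ext x
  have := LinearMap.congr_fun hgf (s x)
  simp only [LinearMap.comp_apply, LinearMap.id_apply] at this ⊢
  rw [this, hrs]

theorem inAdd_pow (k : ℕ) : InAdd A M (Fin k → M) :=
  ⟨k, LinearMap.id, LinearMap.id, rfl⟩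

theorem inAdd_prod (hX : InAdd A M X) (hY : InAdd A M Y) : InAdd A M (X × Y) := by
  obtain ⟨k, f, g, hgf⟩ := hX
  obtain ⟨l, f', g', hgf'⟩ := hY
  let e := (LinearEquiv.funCongrLeft A M (finSumFinEquiv (m := k) (n := l)).symm).symm.trans
    (LinearEquiv.sumArrowLequivProdArrow (Fin k) (Fin l) A M)
  refine ⟨k + l, e.symm.toLinearMap.comp (f.prodMap f'), (g.prodMap g').comp e.toLinearMap, ?_⟩
  apply LinearMap.ext
  rintro ⟨x, y⟩
  have h1 := LinearMap.congr_fun hgf x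
  have h2 := LinearMap.congr_fun hgf' y
  simp only [LinearMap.comp_apply, LinearMap.id_apply, LinearEquiv.coe_coe,
    LinearEquiv.apply_symm_apply, LinearMap.prodMap_apply] at *
  rw [h1, h2]

end PD

end Hrd

namespace Hrd

/-- The properties of a surjective ring homomorphism which make the whole theory work. -/
structure Good {A B : Type} [Ring A] [Ring B] (q : A →+* B) : Prop where
  surj : Function.Surjective q
  jac : RingHom.ker q ≤ Ring.jacobson A
  mono : ∀ {α β : Type} [Finite α] [Finite β] (φ : (α → A) →ₗ[A] (β → A)),
    Function.Injective φ ↔ ∀ x, φ x ∈ IM q (β → A) → x ∈ IM q (α → A)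
  ext : ∀ {α β γ : Type} [Finite α] [Finite β] [Finite γ] (φ : (α → A) →ₗ[A] (β → A))
    (θ : (α → A) →ₗ[A] (γ → A)), Function.Injective φ → (∀ x, θ x ∈ IM q (γ → A)) →
    ∃ θ' : (β → A) →ₗ[A] (γ → A), (∀ x, θ' x ∈ IM q (γ → A)) ∧ ∀ x, θ' (φ x) = θ x

section Main

variable {A B : Type} [Ring A] [Ring B] {q : A →+* B}
variable {M N X Y P Q : Type} [AddCommGroup M] [Module A M] [AddCommGroup N] [Module A N]
  [AddCommGroup X] [Module A X] [AddCommGroup Y] [Module A Y] [AddCommGroup P] [Module A P]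
  [AddCommGroup Q] [Module A Q]
variable {Z Z' L : Type} [AddCommGroup Z] [Module B Z] [AddCommGroup Z'] [Module B Z']
  [AddCommGroup L] [Module B L]

theorem nakayama (hG : Good q) [Module.Finite A M] (h : IM q M = ⊤) : Subsingleton M := by
  have h1 : (⊤ : Submodule A M) = ⊥ := by
    refine Submodule.FG.eq_bot_of_le_jacobson_smul Module.Finite.fg_top ?_
    rw [← h]
    exact (Submodule.smul_mono_left hG.jac).trans (by rw [h])
  exact (Submodule.subsingleton_iff A).1 (subsingleton_of_bot_eq_top h1.symm)

theorem surj_of_red (hG : Good q) [Module.Finite A Y] {pX : X →ₛₗ[q] Z} {pY : Y →ₛₗ[q] Z'}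
    (hX : IsRed pX) (hY : IsRed pY) (f : X →ₗ[A] Y) (h : Z →ₗ[B] Z')
    (hf : ∀ x, pY (f x) = h (pX x)) (hh : Function.Surjective h) : Function.Surjective f := by
  have : Subsingleton (Y ⧸ LinearMap.range f) := by
    apply nakayama hG
    rw [eq_top_iff]
    intro y _
    obtain ⟨y, rfl⟩ := (LinearMap.range f).mkQ_surjective y
    obtain ⟨z, hz⟩ := hh (pY y)
    obtain ⟨x, rfl⟩ := hX.surj z
    have hm : y - f x ∈ IM q Y := hY.ker _ (by simp [hf, hz])
    have := map_mem_IM (LinearMap.range f).mkQ hm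
    have h0 : (LinearMap.range f).mkQ (f x) = 0 :=
      (Submodule.Quotient.mk_eq_zero _).2 ⟨x, rfl⟩
    simpa only [map_sub, h0, sub_zero] using this
  rw [← LinearMap.range_eq_top]
  exact Submodule.Quotient.subsingleton_iff.1 this

theorem exists_retract (Q : Type) [AddCommGroup Q] [Module A Q] [Module.Finite A Q]
    [Module.Projective A Q] : ∃ (k : ℕ) (s : Q →ₗ[A] (Fin k → A)) (r : (Fin k → A) →ₗ[A] Q),
      ∀ x, r (s x) = x := by
  obtain ⟨k, r, hr⟩ := Module.Finite.exists_fin' A Q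
  obtain ⟨s, hs⟩ := proj_lift r hr LinearMap.id
  exact ⟨k, s, r, hs⟩

/-- The auxiliary free map attached to a map of projectives. -/
theorem exists_aux (φ : P →ₗ[A] Q) [Module.Finite A P] [Module.Projective A P]
    [Module.Finite A Q] [Module.Projective A Q] :
    ∃ (a b : ℕ) (s : P →ₗ[A] (Fin a → A)) (r : (Fin a → A) →ₗ[A] P)
      (t : Q →ₗ[A] (Fin b ⊕ Fin a → A)) (u : (Fin b ⊕ Fin a → A) →ₗ[A] Q)
      (v : (Fin b ⊕ Fin a → A) →ₗ[A] (Fin a → A))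
      (ψ : (Fin a → A) →ₗ[A] (Fin b ⊕ Fin a → A)),
      (∀ x, r (s x) = x) ∧ (∀ x, ψ (s x) = t (φ x)) ∧ (∀ x, u (t x) = x) ∧
      (∀ x, u (ψ x) = φ (r x)) ∧ (∀ x, v (ψ x) = x - s (r x)) := by
  obtain ⟨a, s, r, hrs⟩ := exists_retract (A := A) P
  obtain ⟨b, s0, r0, hrs0⟩ := exists_retract (A := A) Q
  let e := LinearEquiv.sumArrowLequivProdArrow (Fin b) (Fin a) A A
  refine ⟨a, b, s, r, e.symm.toLinearMap.comp ((LinearMap.inl A _ _).comp s0),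
    (r0.comp (LinearMap.fst A _ _)).comp e.toLinearMap,
    (LinearMap.snd A _ _).comp e.toLinearMap,
    e.symm.toLinearMap.comp (LinearMap.prod (s0.comp (φ.comp r)) (LinearMap.id - s.comp r)),
    hrs, ?_, ?_, ?_, ?_⟩
  · intro x; simp [hrs]
  · intro x
    simp only [LinearMap.comp_apply, LinearEquiv.coe_coe, LinearEquiv.apply_symm_apply]
    simp [hrs0]
  · intro x
    simp only [LinearMap.comp_apply, LinearEquiv.coe_coe, LinearEquiv.apply_symm_apply]
    simp [hrs0]
  · intro x
    simp only [LinearMap.comp_apply, LinearEquiv.coe_coe, LinearEquiv.apply_symm_apply]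
    simp

theorem Good.inj_iff (hG : Good q) (φ : P →ₗ[A] Q) [Module.Finite A P] [Module.Projective A P]
    [Module.Finite A Q] [Module.Projective A Q] :
    Function.Injective φ ↔ ∀ x, φ x ∈ IM q Q → x ∈ IM q P := by
  obtain ⟨a, b, s, r, t, u, v, ψ, hrs, hψ, hut, huψ, hvψ⟩ := exists_aux φ
  have h1 : Function.Injective φ ↔ Function.Injective ψ := by
    constructor
    · intro h
      rw [injective_iff_map_eq_zero] at h ⊢
      intro x hx
      have h2 := huψ x
      rw [hx, map_zero] at h2
      have h3 := hvψ x
      rw [hx, map_zero, h _ h2.symm, map_zero, sub_zero] at h3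
      exact h3.symm
    · intro h
      rw [injective_iff_map_eq_zero] at h ⊢
      intro x hx
      have := h (s x) (by rw [hψ, hx, map_zero])
      rw [← hrs x, this, map_zero]
  rw [h1, hG.mono]
  constructor
  · intro h x hx
    have := h (s x) (by rw [hψ]; exact map_mem_IM t hx)
    rw [← hrs x]
    exact map_mem_IM r this
  · intro h x hx
    have h2 := map_mem_IM u hx
    rw [huψ] at h2
    have h3 := map_mem_IM v hx
    rw [hvψ] at h3
    have := add_mem h3 (map_mem_IM s (h _ h2))
    simpa using this

theorem Good.extend (hG : Good q) (φ : P →ₗ[A] Q) [Module.Finite A P] [Module.Projective A P]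
    [Module.Finite A Q] [Module.Projective A Q] [Module.Finite A Y] (hφ : Function.Injective φ)
    (θ : P →ₗ[A] Y) (hθ : ∀ x, θ x ∈ IM q Y) :
    ∃ θ' : Q →ₗ[A] Y, (∀ x, θ' x ∈ IM q Y) ∧ ∀ x, θ' (φ x) = θ x := by
  obtain ⟨a, b, s, r, t, u, v, ψ, hrs, hψ, hut, huψ, hvψ⟩ := exists_aux φ
  have hi : Function.Injective ψ := by
    rw [injective_iff_map_eq_zero] at hφ ⊢
    intro x hx
    have h2 := huψ x
    rw [hx, map_zero] at h2
    have h3 := hvψ x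
    rw [hx, map_zero, hφ _ h2.symm, map_zero, sub_zero] at h3
    exact h3.symm
  obtain ⟨c, w, hw⟩ := Module.Finite.exists_fin' A Y
  obtain ⟨Θ, hΘ, hΘI⟩ := proj_lift_IM w hw (θ.comp r) fun x => hθ _
  obtain ⟨Θ', hI, hΘ'⟩ := hG.ext ψ Θ hi hΘI
  refine ⟨w.comp (Θ'.comp t), fun x => map_mem_IM w (hI _), fun x => ?_⟩
  simp only [LinearMap.comp_apply]
  rw [← hψ, hΘ', hΘ, LinearMap.comp_apply, hrs]

variable [IsNoetherianRing A]

/-- finitely generated presentations -/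
theorem exists_pres [Module.Finite A X] (h : PdLeOne A X) :
    ∃ (k : ℕ) (g : (Fin k → A) →ₗ[A] X), Function.Surjective g ∧
      Module.Projective A (LinearMap.ker g) := by
  obtain ⟨k, g, hg⟩ := Module.Finite.exists_fin' A X
  exact ⟨k, g, hg, PdLeOne.ker_projective h g hg⟩

/-- fullness -/
theorem Good.full (hG : Good q) [Module.Finite A X] [Module.Finite A Y] (hpd : PdLeOne A X)
    (pX : X →ₛₗ[q] Z) {pY : Y →ₛₗ[q] Z'} (hY : IsRed pY)
    (h : Z →ₗ[B] Z') : ∃ f : X →ₗ[A] Y, ∀ x, pY (f x) = h (pX x) := by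
  obtain ⟨k, g, hg, hker⟩ := exists_pres hpd
  obtain ⟨f0, hf0⟩ := proj_lift_semi pY hY.surj ((h.comp pX).comp g)
  obtain ⟨f1, hf1, hf1'⟩ := hG.extend (LinearMap.ker g).subtype (Submodule.subtype_injective _)
    (f0.comp (LinearMap.ker g).subtype) fun x => hY.ker _ (by simp [hf0])
  obtain ⟨f, hf⟩ := exists_linear_factor g hg (f0 - f1) fun x hx => by
    have := hf1' ⟨x, hx⟩
    simp at this
    simp [this]
  refine ⟨f, fun x => ?_⟩
  obtain ⟨y, rfl⟩ := hg x
  simp [hf, hf0, semi_eq_zero pY (hf1 y)]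

theorem Good.reflect (hG : Good q) [Module.Finite A X] [Module.Finite A Y] (hpdX : PdLeOne A X)
    (hpdY : PdLeOne A Y) {pX : X →ₛₗ[q] Z} {pY : Y →ₛₗ[q] Z'} (hX : IsRed pX) (hY : IsRed pY)
    (e : Z ≃ₗ[B] Z') : Nonempty (X ≃ₗ[A] Y) := by
  obtain ⟨f, hf⟩ := hG.full hpdX pX hY e.toLinearMap
  obtain ⟨g, hg⟩ := hG.full hpdY pY hX e.symm.toLinearMap
  have hfs := surj_of_red hG hX hY f _ hf e.surjective
  have hgs := surj_of_red hG hY hX g _ hg e.symm.surjective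
  have : Function.Injective (g.comp f) :=
    IsNoetherian.injective_of_surjective_endomorphism (g.comp f) (hgs.comp hfs)
  exact ⟨LinearEquiv.ofBijective f ⟨Function.Injective.of_comp this, hfs⟩⟩

/-- reduction of a presentation -/
theorem Good.red_pres (hG : Good q) [Module.Finite A P] [Module.Projective A P]
    {pP : P →ₛₗ[q] L} {pX : X →ₛₗ[q] Z} (hP : IsRed pP) (hX : IsRed pX) (g : P →ₗ[A] X)
    (hg : Function.Surjective g) (hker : Module.Projective A (LinearMap.ker g)) :
    ∃ (g' : L →ₗ[B] Z) (r : LinearMap.ker g →ₛₗ[q] LinearMap.ker g'),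
      (∀ x, g' (pP x) = pX (g x)) ∧ Function.Surjective g' ∧ IsRed r ∧
      ∀ x : LinearMap.ker g, (r x : L) = pP x := by
  obtain ⟨g', hg'⟩ := hP.map (p' := pX) hG.surj g
  let r : LinearMap.ker g →ₛₗ[q] LinearMap.ker g' :=
    { toFun := fun x => ⟨pP x, by simp [hg']⟩
      map_add' := fun x y => by ext; simp
      map_smul' := fun a x => by ext; simp }
  refine ⟨g', r, hg', ?_, ⟨?_, ?_⟩, fun x => rfl⟩
  · intro z
    obtain ⟨x, rfl⟩ := hX.surj z
    obtain ⟨y, rfl⟩ := hg x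
    exact ⟨pP y, hg' y⟩
  · rintro ⟨z, hz⟩
    obtain ⟨x, rfl⟩ := hP.surj z
    have : g x ∈ IM q X := hX.ker _ (by rw [← hg']; exact hz)
    obtain ⟨y, hy, hyx⟩ := exists_IM_preimage g hg this
    refine ⟨⟨x - y, by simp [hyx]⟩, ?_⟩
    ext
    simp [r, semi_eq_zero pP hy]
  · intro x hx
    have h1 : pP x = 0 := congrArg Subtype.val hx
    exact (hG.inj_iff (LinearMap.ker g).subtype).1 (Submodule.subtype_injective _) x (hP.ker _ h1)

theorem isRed_free (hq : Function.Surjective q) (k : ℕ) :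
    IsRed (piSemi (fun _ : Fin k => q.toSemilinearMap)) :=
  isRed_pi _ fun _ => isRed_self hq

theorem Good.pd_red (hG : Good q) [Module.Finite A X] (hpd : PdLeOne A X) {pX : X →ₛₗ[q] Z}
    (hX : IsRed pX) : PdLeOne B Z := by
  obtain ⟨k, g, hg, hker⟩ := exists_pres hpd
  obtain ⟨g', r, -, hg', hr, -⟩ := hG.red_pres (isRed_free hG.surj k) hX g hg hker
  exact pdLeOne_of_surj g' hg' (hr.projective hG.surj)

theorem Good.ext_iff (hG : Good q) [Module.Finite A X] [Module.Finite A Y] (hpd : PdLeOne A X)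
    {pX : X →ₛₗ[q] Z} {pY : Y →ₛₗ[q] Z'} (hX : IsRed pX) (hY : IsRed pY) :
    Ext1Zero A X Y ↔ Ext1Zero B Z Z' := by
  obtain ⟨k, g, hg, hker⟩ := exists_pres hpd
  have hF := isRed_free (q := q) hG.surj k
  obtain ⟨g', r, hgg, hg', hr, hrr⟩ := hG.red_pres hF hX g hg hker
  rw [ext1Zero_iff g hg, ext1Zero_iff g' hg']
  constructor
  · intro h θ
    obtain ⟨l, hl⟩ := proj_lift_semi pY hY.surj (θ.comp r)
    obtain ⟨l', hl'⟩ := h l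
    obtain ⟨θ', hθ'⟩ := hF.map (p' := pY) hG.surj l'
    refine ⟨θ', fun z => ?_⟩
    obtain ⟨x, rfl⟩ := hr.surj z
    rw [hrr, hθ', hl', hl]
    rfl
  · intro h θ
    obtain ⟨θ1, hθ1⟩ := hr.map (p' := pY) hG.surj θ
    obtain ⟨θ2, hθ2⟩ := h θ1
    obtain ⟨l, hl⟩ := proj_lift_semi pY hY.surj (θ2.comp (piSemi (fun _ : Fin k => q.toSemilinearMap)))
    obtain ⟨m, hm, hm'⟩ := hG.extend (LinearMap.ker g).subtype (Submodule.subtype_injective _)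
      (θ - l.comp (LinearMap.ker g).subtype) fun x => hY.ker _ (by
        have h1 := hl x
        have h2 := hθ2 (r x)
        rw [hrr] at h2
        simp only [LinearMap.comp_apply] at h1
        simp only [LinearMap.sub_apply, LinearMap.comp_apply, map_sub, Submodule.subtype_apply]
        rw [h1, h2, hθ1, sub_self])
    refine ⟨l + m, fun x => ?_⟩
    have := hm' x
    simp at this
    simp [this]

/-- purity -/
theorem Good.pure (hG : Good q) [Module.Finite A X] (hpd : PdLeOne A X) (f : M →ₗ[A] N)
    (g : N →ₗ[A] X) (hf : Function.Injective f) (hg : Function.Surjective g)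
    (hex : LinearMap.range f = LinearMap.ker g) (m : M) (hm : f m ∈ IM q N) : m ∈ IM q M := by
  obtain ⟨k, c, hc, hker⟩ := exists_pres hpd
  obtain ⟨l, hl⟩ := proj_lift g hg c
  let w : (M × (Fin k → A)) →ₗ[A] N := LinearMap.coprod f l
  have hw : Function.Surjective w := by
    intro n
    obtain ⟨y, hy⟩ := hc (g n)
    have : n - l y ∈ LinearMap.range f := by rw [hex]; simp [hl, hy]
    obtain ⟨m', hm'⟩ := this
    exact ⟨(m', y), by simp [w, hm']⟩
  obtain ⟨⟨m', y⟩, hI, hmy⟩ := exists_IM_preimage w hw hm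
  have hm' : m' ∈ IM q M := map_mem_IM (LinearMap.fst A _ _) hI
  have hy : y ∈ IM q _ := map_mem_IM (LinearMap.snd A _ _) hI
  have hgf : ∀ m, g (f m) = 0 := fun m => by
    have : f m ∈ LinearMap.ker g := hex ▸ ⟨m, rfl⟩
    exact this
  have hcy : c y = 0 := by
    have := congrArg g hmy
    simpa [w, hgf, hl] using this
  have hy2 : (⟨y, hcy⟩ : LinearMap.ker c) ∈ IM q (LinearMap.ker c) :=
    (hG.inj_iff (LinearMap.ker c).subtype).1 (Submodule.subtype_injective _) _ hy
  let e := LinearEquiv.ofInjective f hf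
  let l' : LinearMap.ker c →ₗ[A] M := e.symm.toLinearMap.comp
    (LinearMap.codRestrict (LinearMap.range f) (l.comp (LinearMap.ker c).subtype) fun x => by
      rw [hex]; simp [hl])
  have hl' : ∀ x, f (l' x) = l x := by
    intro x
    have : e (l' x) = ⟨l x, by rw [hex]; simp [hl]⟩ := by
      simp only [l', LinearMap.comp_apply, LinearEquiv.coe_coe, LinearEquiv.apply_symm_apply]
      rfl
    exact congrArg Subtype.val this
  have : m = m' + l' ⟨y, hcy⟩ := by
    apply hf
    rw [map_add, hl', ← hmy]
    simp [w]
  rw [this]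
  exact add_mem hm' (map_mem_IM l' hy2)

theorem inAdd_red (hq : Function.Surjective q) {T : Type} [AddCommGroup T] [Module A T]
    {pX : X →ₛₗ[q] Z} {pT : T →ₛₗ[q] Z'} (hX : IsRed pX) (hT : IsRed pT) (h : InAdd A T X) :
    InAdd B Z' Z := by
  obtain ⟨k, f, g, hgf⟩ := h
  have hp := isRed_pi (fun _ : Fin k => pT) fun _ => hT
  obtain ⟨f', hf'⟩ := hX.map (p' := piSemi (fun _ : Fin k => pT)) hq f
  obtain ⟨g', hg'⟩ := hp.map (p' := pX) hq g
  refine ⟨k, f', g', ?_⟩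
  ext z
  obtain ⟨x, rfl⟩ := hX.surj z
  simp only [LinearMap.comp_apply, hf', hg', LinearMap.id_apply]
  exact congrArg pX (LinearMap.congr_fun hgf x)

end Main

end Hrd

namespace Hrd

/-- Tilting modules over a ring, left module version. -/
def IsTilt (A : Type) [Ring A] (T : Type) [AddCommGroup T] [Module A T] : Prop :=
  Module.Finite A T ∧ PdLeOne A T ∧ Ext1Zero A T T ∧
    ∃ (T₀ T₁ : ModuleCat.{0} A) (f : A →ₗ[A] ↥T₀) (g : ↥T₀ →ₗ[A] ↥T₁),
      InAdd A T ↥T₀ ∧ InAdd A T ↥T₁ ∧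
        Function.Injective f ∧ Function.Surjective g ∧ LinearMap.range f = LinearMap.ker g

section Main

variable {A B : Type} [Ring A] [Ring B] {q : A →+* B} [IsNoetherianRing A]
variable {M N X Y P Q : Type} [AddCommGroup M] [Module A M] [AddCommGroup N] [Module A N]
  [AddCommGroup X] [Module A X] [AddCommGroup Y] [Module A Y] [AddCommGroup P] [Module A P]
  [AddCommGroup Q] [Module A Q]
variable {Z Z' L : Type} [AddCommGroup Z] [Module B Z] [AddCommGroup Z'] [Module B Z']
  [AddCommGroup L] [Module B L]
variable {T : Type} [AddCommGroup T] [Module A T]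

theorem Good.tilt_red (hG : Good q) {p : T →ₛₗ[q] Z} (hp : IsRed p) (h : IsTilt A T) :
    IsTilt B Z := by
  obtain ⟨hfin, hpd, hext, T₀, T₁, f, g, h0, h1, hf, hg, hex⟩ := h
  have := finite_inAdd h0
  have := finite_inAdd h1
  have hpd1 := pdLeOne_inAdd hpd h1
  obtain ⟨Z₀, p₀, hp₀⟩ := exists_red (q := q) hG.surj T₀
  obtain ⟨Z₁, p₁, hp₁⟩ := exists_red (q := q) hG.surj T₁
  have hA := isRed_self (q := q) hG.surj
  obtain ⟨f', hf'⟩ := hA.map (p' := p₀) hG.surj f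
  obtain ⟨g', hg'⟩ := hp₀.map (p' := p₁) hG.surj g
  refine ⟨hp.finite hG.surj, hG.pd_red hpd hp, (hG.ext_iff hpd hp hp).1 hext, Z₀, Z₁, f', g',
    inAdd_red hG.surj hp₀ hp h0, inAdd_red hG.surj hp₁ hp h1, ?_, ?_, ?_⟩
  · rw [injective_iff_map_eq_zero]
    intro b hb
    obtain ⟨a, rfl⟩ := hA.surj b
    rw [hf'] at hb
    exact semi_eq_zero _ (hG.pure hpd1 f g hf hg hex a (hp₀.ker _ hb))
  · intro z
    obtain ⟨x, rfl⟩ := hp₁.surj z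
    obtain ⟨y, rfl⟩ := hg x
    exact ⟨p₀ y, hg' y⟩
  · have hgf : ∀ m, g (f m) = 0 := fun m => by
      have : f m ∈ LinearMap.ker g := hex ▸ ⟨m, rfl⟩
      exact this
    apply le_antisymm
    · rintro _ ⟨b, rfl⟩
      obtain ⟨a, rfl⟩ := hA.surj b
      rw [LinearMap.mem_ker, hf', hg', hgf, map_zero]
    · intro z hz
      obtain ⟨x, rfl⟩ := hp₀.surj z
      have hz' : g' (p₀ x) = 0 := hz
      rw [hg'] at hz'
      obtain ⟨y, hy, hyx⟩ := exists_IM_preimage g hg (hp₁.ker _ hz')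
      have : x - y ∈ LinearMap.range f := by rw [hex]; simp [hyx]
      obtain ⟨a, ha⟩ := this
      refine ⟨q a, ?_⟩
      have := hf' a
      simp only [RingHom.coe_toSemilinearMap] at this
      rw [this, ha, map_sub, semi_eq_zero p₀ hy, sub_zero]

theorem Good.tilt_lift (hG : Good q) [Module.Finite A T] (hpd : PdLeOne A T) {p : T →ₛₗ[q] Z}
    (hp : IsRed p) (h : IsTilt B Z) : IsTilt A T := by
  obtain ⟨hfin, hpdZ, hext, Z₀, Z₁, f₀, g₀, ⟨k, j, r, hrj⟩, h1, hf₀, hg₀, hex⟩ := h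
  have hrj' : ∀ x, r (j x) = x := fun x => LinearMap.congr_fun hrj x
  refine ⟨inferInstance, hpd, (hG.ext_iff hpd hp hp).2 hext, ?_⟩
  let f1 : B →ₗ[B] (Fin k → Z) := j.comp f₀
  let C' := (Fin k → Z) ⧸ LinearMap.range f1
  have hC' : InAdd B Z C' := by
    let s0 : (Fin k → Z) →ₗ[B] Z₁ × (Fin k → Z) :=
      LinearMap.prod (g₀.comp r) (LinearMap.id - j.comp r)
    have hgf : ∀ b, g₀ (f₀ b) = 0 := fun m => by
      have : f₀ m ∈ LinearMap.ker g₀ := hex ▸ ⟨m, rfl⟩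
      exact this
    obtain ⟨s, hs⟩ := exists_linear_factor (LinearMap.range f1).mkQ
      (LinearMap.range f1).mkQ_surjective s0 (by
        intro x hx
        obtain ⟨b, rfl⟩ := (Submodule.Quotient.mk_eq_zero _).1 hx
        simp [s0, f1, hrj', hgf])
    obtain ⟨t, ht⟩ := exists_linear_factor g₀ hg₀ ((LinearMap.range f1).mkQ.comp j) (by
        intro x hx
        have : x ∈ LinearMap.range f₀ := by rw [hex]; exact hx
        obtain ⟨b, rfl⟩ := this
        exact (Submodule.Quotient.mk_eq_zero _).2 ⟨b, rfl⟩)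
    refine inAdd_retract s (LinearMap.coprod t ((LinearMap.range f1).mkQ.comp
      (LinearMap.id - j.comp r))) ?_ (inAdd_prod h1 (inAdd_pow k))
    intro x
    obtain ⟨z, rfl⟩ := (LinearMap.range f1).mkQ_surjective x
    rw [hs]
    change t (g₀ (r z)) + (LinearMap.range f1).mkQ ((z - j (r z)) - j (r (z - j (r z)))) =
      (LinearMap.range f1).mkQ z
    rw [ht, LinearMap.comp_apply, ← map_add]
    congr 1
    simp [hrj']
  have hpk := isRed_pi (fun _ : Fin k => p) fun _ => hp
  have hpdk : PdLeOne A (Fin k → T) := pdLeOne_pi fun _ => hpd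
  obtain ⟨f, hf⟩ := proj_lift_semi (piSemi (fun _ : Fin k => p)) hpk.surj
    (f1.comp q.toSemilinearMap)
  have hf1 : Function.Injective f1 := by
    refine Function.LeftInverse.injective (g := r) hrj' |>.comp hf₀
  obtain ⟨l, g, hg, hker⟩ := exists_pres hpdk
  obtain ⟨f2, hf2⟩ := proj_lift g hg f
  let φ : (LinearMap.ker g × A) →ₗ[A] (Fin l → A) := LinearMap.coprod (LinearMap.ker g).subtype f2
  have hφ : Function.Injective φ := by
    rw [hG.inj_iff]
    rintro ⟨x, a⟩ hxa
    have h2 := map_mem_IM g hxa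
    have h3 : g (φ (x, a)) = f a := by simp [φ, hf2]
    rw [h3] at h2
    have h4 := semi_eq_zero (piSemi (fun _ : Fin k => p)) h2
    rw [hf] at h4
    have h5 : q a = 0 := by
      apply hf1
      rw [map_zero]
      exact h4
    have h6 : a ∈ IM q A := (isRed_self hG.surj).ker a h5
    have h7 : (LinearMap.ker g).subtype x ∈ IM q (Fin l → A) := by
      have := sub_mem hxa (map_mem_IM f2 h6)
      simpa [φ] using this
    exact mem_IM_prod ((hG.inj_iff (LinearMap.ker g).subtype).1
      (Submodule.subtype_injective _) _ h7) h6
  have hfi : Function.Injective f := by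
    rw [injective_iff_map_eq_zero]
    intro a ha
    have h1 : g (f2 a) = 0 := by rw [hf2, ha]
    have h2 : φ (-⟨f2 a, h1⟩, a) = 0 := by simp [φ]
    rw [injective_iff_map_eq_zero] at hφ
    exact congrArg Prod.snd (hφ _ h2)
  let C := (Fin k → T) ⧸ LinearMap.range f
  have hpdC : PdLeOne A C := by
    refine pdLeOne_of_surj ((LinearMap.range f).mkQ.comp g)
      ((LinearMap.range f).mkQ_surjective.comp hg) ?_
    have : LinearMap.ker ((LinearMap.range f).mkQ.comp g) = LinearMap.range φ := by
      apply le_antisymm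
      · intro x hx
        obtain ⟨a, ha⟩ : g x ∈ LinearMap.range f := (Submodule.Quotient.mk_eq_zero _).1 hx
        exact ⟨(⟨x - f2 a, by simp [hf2, ha]⟩, a), by simp [φ]⟩
      · rintro _ ⟨⟨x, a⟩, rfl⟩
        refine (Submodule.Quotient.mk_eq_zero _).2 ⟨a, ?_⟩
        simp [φ, hf2]
    rw [this]
    exact Module.Projective.of_equiv' (LinearEquiv.ofInjective φ hφ)
  obtain ⟨pC, hpC⟩ := exists_semi_factor (LinearMap.range f).mkQ (LinearMap.range f).mkQ_surjective
    ((LinearMap.range f1).mkQ.comp (piSemi (fun _ : Fin k => p))) (by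
      intro x hx
      obtain ⟨a, rfl⟩ := (Submodule.Quotient.mk_eq_zero _).1 hx
      refine (Submodule.Quotient.mk_eq_zero _).2 ⟨q a, ?_⟩
      rw [hf]; rfl)
  have hC : IsRed pC := by
    constructor
    · intro c
      obtain ⟨z, rfl⟩ := (LinearMap.range f1).mkQ_surjective c
      obtain ⟨x, rfl⟩ := hpk.surj z
      exact ⟨_, hpC x⟩
    · intro c hc
      obtain ⟨x, rfl⟩ := (LinearMap.range f).mkQ_surjective c
      rw [hpC] at hc
      obtain ⟨b, hb⟩ := (Submodule.Quotient.mk_eq_zero _).1 hc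
      obtain ⟨a, rfl⟩ := hG.surj b
      have h1 : x - f a ∈ IM q _ := hpk.ker _ (by
        rw [map_sub, hf, ← hb]; simp)
      have h2 := map_mem_IM (LinearMap.range f).mkQ h1
      have h3 : (LinearMap.range f).mkQ (f a) = 0 :=
        (Submodule.Quotient.mk_eq_zero _).2 ⟨a, rfl⟩
      rwa [map_sub, h3, sub_zero] at h2
  refine ⟨ModuleCat.of A (Fin k → T), ModuleCat.of A C, f, (LinearMap.range f).mkQ,
    inAdd_pow k, ?_, hfi, (LinearMap.range f).mkQ_surjective, (Submodule.ker_mkQ _).symm⟩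
  obtain ⟨n, u', v', hvu⟩ := hC'
  have hpn := isRed_pi (fun _ : Fin n => p) fun _ => hp
  obtain ⟨u, hu⟩ := hG.full hpdC pC hpn u'
  obtain ⟨v, hv⟩ := hG.full (pdLeOne_pi fun _ => hpd) (piSemi (fun _ : Fin n => p)) hC v'
  have hs : Function.Surjective (v.comp u) := surj_of_red hG hC hC (v.comp u) LinearMap.id (by
    intro x
    rw [LinearMap.comp_apply, hv, hu]
    exact LinearMap.congr_fun hvu _) Function.surjective_id
  have hb : Function.Bijective (v.comp u) :=
    ⟨IsNoetherian.injective_of_surjective_endomorphism _ hs, hs⟩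
  let e := LinearEquiv.ofBijective _ hb
  refine inAdd_retract (u.comp e.symm.toLinearMap) v ?_ (inAdd_pow n)
  intro x
  exact e.apply_symm_apply x

variable [IsArtinianRing A]

theorem exists_fitting [Module.Finite A M] (f : Module.End A M) :
    ∃ n, 0 < n ∧ IsCompl (LinearMap.ker (f ^ n)) (LinearMap.range (f ^ n)) := by
  obtain ⟨n, hn⟩ := Filter.eventually_atTop.1 (f.eventually_isCompl_ker_pow_range_pow)
  exact ⟨n + 1, Nat.succ_pos n, hn _ (Nat.le_succ n)⟩

theorem indec_fitting [Module.Finite A M] (h : IsIndecomposableMod A M) (f : Module.End A M) :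
    (∃ n, 0 < n ∧ f ^ n = 0) ∨ Function.Bijective f := by
  obtain ⟨n, hn, hc⟩ := exists_fitting f
  rcases h.2 _ _ hc with h1 | h1
  · right
    have hi : Function.Injective f := by
      rw [LinearMap.ker_eq_bot] at h1
      obtain ⟨m, rfl⟩ := Nat.exists_eq_succ_of_ne_zero hn.ne'
      rw [pow_succ] at h1
      exact Function.Injective.of_comp (f := ⇑(f ^ m)) h1
    exact ⟨hi, IsArtinian.surjective_of_injective_endomorphism f hi⟩
  · left
    exact ⟨n, hn, LinearMap.range_eq_bot.1 h1⟩

/-- lifting of projectives -/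
theorem Good.lift_proj (hG : Good q) [Module.Finite B L] [Module.Projective B L] :
    ∃ (P : ModuleCat.{0} A) (p : P →ₛₗ[q] L), Module.Finite A P ∧ Module.Projective A P ∧
      IsRed p := by
  obtain ⟨k, s, r, hrs⟩ := exists_retract (A := B) L
  have hF := isRed_free (q := q) hG.surj k
  set pF := piSemi (fun _ : Fin k => q.toSemilinearMap) with hpF
  obtain ⟨f, hf⟩ := proj_lift_semi pF hF.surj ((s.comp r).comp pF)
  have hf' : ∀ x, pF (f x) = s (r (pF x)) := hf
  obtain ⟨n, hn, hc⟩ := exists_fitting (A := A) (M := Fin k → A) f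
  obtain ⟨n, rfl⟩ := Nat.exists_eq_succ_of_ne_zero hn.ne'
  have hfn : ∀ (n : ℕ) x, pF ((f ^ (n + 1)) x) = s (r (pF x)) := by
    intro n
    induction n with
    | zero => intro x; simpa using hf' x
    | succ n ih =>
      intro x
      rw [pow_succ, Module.End.mul_apply, ih, hf', hrs]
  let P := LinearMap.range (f ^ n.succ)
  let t : (Fin k → A) →ₗ[A] P := Submodule.linearProjOfIsCompl _ _ hc.symm
  have ht : ∀ x : P, t x = x := fun x => Submodule.linearProjOfIsCompl_apply_left hc.symm x
  refine ⟨ModuleCat.of A P, r.comp (pF.comp P.subtype), ?_, ?_, ?_, ?_⟩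
  · exact inferInstanceAs (Module.Finite A P)
  · exact Module.Projective.of_split P.subtype t (by ext x; simp [ht])
  · intro l
    obtain ⟨y, hy⟩ := hF.surj (s l)
    refine ⟨⟨(f ^ n.succ) y, ⟨y, rfl⟩⟩, ?_⟩
    change r (pF ((f ^ (n + 1)) y)) = l
    rw [hfn, hy, hrs, hrs]
  · intro x hx
    obtain ⟨y, hy⟩ := x.2
    have h1 : pF x.1 = 0 := by
      have h2 : r (pF x.1) = 0 := hx
      rw [← hy, hfn, hrs] at h2
      rw [← hy, hfn, h2, map_zero]
    have := map_mem_IM t (hF.ker _ h1)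
    rwa [ht] at this

theorem Good.dense (hG : Good q) [Module.Finite B Z] (hpd : PdLeOne B Z) :
    ∃ (X : ModuleCat.{0} A) (p : X →ₛₗ[q] Z), Module.Finite A X ∧ PdLeOne A X ∧ IsRed p := by
  haveI : RingHomSurjective q := ⟨hG.surj⟩
  haveI : IsNoetherianRing B := isNoetherianRing_of_surjective A B q hG.surj
  obtain ⟨k, g, hg, hker⟩ := exists_pres hpd
  obtain ⟨P, pP, hPf, hPp, hP⟩ := hG.lift_proj (L := LinearMap.ker g)
  have hF := isRed_free (q := q) hG.surj k
  set pF := piSemi (fun _ : Fin k => q.toSemilinearMap) with hpF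
  obtain ⟨φ, hφ⟩ := proj_lift_semi pF hF.surj ((LinearMap.ker g).subtype.comp pP)
  have hφ' : ∀ x, pF (φ x) = pP x := hφ
  have hi : Function.Injective φ := by
    rw [hG.inj_iff]
    intro x hx
    have := semi_eq_zero pF hx
    rw [hφ'] at this
    exact hP.ker _ (Subtype.ext this)
  obtain ⟨p, hp⟩ := exists_semi_factor (LinearMap.range φ).mkQ (LinearMap.range φ).mkQ_surjective
    (g.comp pF) (by
      intro x hx
      obtain ⟨a, rfl⟩ := (Submodule.Quotient.mk_eq_zero _).1 hx
      rw [LinearMap.comp_apply, hφ']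
      exact (pP a).2)
  refine ⟨ModuleCat.of A ((Fin k → A) ⧸ LinearMap.range φ), p, ?_, ?_, ?_, ?_⟩
  · exact inferInstanceAs (Module.Finite A ((Fin k → A) ⧸ LinearMap.range φ))
  · refine pdLeOne_of_surj (LinearMap.range φ).mkQ (LinearMap.range φ).mkQ_surjective ?_
    rw [Submodule.ker_mkQ]
    exact Module.Projective.of_equiv' (LinearEquiv.ofInjective φ hi)
  · intro z
    obtain ⟨y, rfl⟩ := hg z
    obtain ⟨x, rfl⟩ := hF.surj y
    exact ⟨_, hp x⟩
  · intro c hc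
    obtain ⟨x, rfl⟩ := (LinearMap.range φ).mkQ_surjective c
    rw [hp] at hc
    obtain ⟨y, hy⟩ := hP.surj ⟨pF x, hc⟩
    have h1 : x - φ y ∈ IM q _ := hF.ker _ (by rw [map_sub, hφ', hy, sub_self])
    have h2 := map_mem_IM (LinearMap.range φ).mkQ h1
    have h3 : (LinearMap.range φ).mkQ (φ y) = 0 := (Submodule.Quotient.mk_eq_zero _).2 ⟨y, rfl⟩
    rwa [map_sub, h3, sub_zero] at h2

end Main

end Hrd

namespace Hrd

section Basic

variable {A B : Type} [Ring A] [Ring B] {q : A →+* B}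
variable {M N X Y P Q : Type} [AddCommGroup M] [Module A M] [AddCommGroup N] [Module A N]
  [AddCommGroup X] [Module A X] [AddCommGroup Y] [Module A Y] [AddCommGroup P] [Module A P]
  [AddCommGroup Q] [Module A Q]
variable {Z Z' L : Type} [AddCommGroup Z] [Module B Z] [AddCommGroup Z'] [Module B Z']
  [AddCommGroup L] [Module B L]
variable {T : Type} [AddCommGroup T] [Module A T]

theorem indec_iff : IsIndecomposableMod A M ↔
    Nontrivial M ∧ ∀ f : M →ₗ[A] M, (∀ x, f (f x) = f x) → (∀ x, f x = 0) ∨ ∀ x, f x = x := by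
  constructor
  · rintro ⟨h1, h2⟩
    refine ⟨h1, fun f hf => ?_⟩
    have hc : IsCompl (LinearMap.ker f) (LinearMap.range f) := by
      refine IsCompl.of_eq ?_ ?_
      · rw [eq_bot_iff]
        rintro _ ⟨hx, ⟨y, rfl⟩⟩
        have hx' : f (f y) = 0 := hx
        rw [hf] at hx'
        simpa using hx'
      · rw [eq_top_iff]
        intro x _
        have : x = (x - f x) + f x := by abel
        rw [this]
        exact Submodule.add_mem_sup (by simp [hf]) ⟨x, rfl⟩
    rcases h2 _ _ hc with h | h
    · right
      intro x
      exact LinearMap.ker_eq_bot.1 h (hf x)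
    · left
      intro x
      have : f x ∈ LinearMap.range f := ⟨x, rfl⟩
      rw [h] at this
      simpa using this
  · rintro ⟨h1, h2⟩
    refine ⟨h1, fun N N' hc => ?_⟩
    have hid : ∀ x : N, Submodule.projectionOnto N N' hc x = x :=
      fun x => Submodule.projectionOnto_apply_left hc x
    rcases h2 (N.subtype.comp (Submodule.projectionOnto N N' hc)) (fun x => by
      simp [hid]) with h | h
    · left
      rw [eq_bot_iff]
      intro x hx
      have h3 := h x
      have := congrArg Subtype.val (hid ⟨x, hx⟩)
      simp only [LinearMap.comp_apply, Submodule.subtype_apply] at h3 this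
      rw [this] at h3
      simpa using h3
    · right
      have : N = ⊤ := by
        rw [eq_top_iff]
        intro x _
        rw [← h x]
        exact (Submodule.projectionOnto N N' hc x).2
      subst this
      exact top_disjoint.1 hc.disjoint

theorem indec_equiv (e : M ≃ₗ[A] N) (h : IsIndecomposableMod A M) : IsIndecomposableMod A N := by
  rw [indec_iff] at h ⊢
  obtain ⟨h1, h2⟩ := h
  refine ⟨e.symm.toEquiv.nontrivial, fun f hf => ?_⟩
  rcases h2 (e.symm.toLinearMap.comp (f.comp e.toLinearMap)) (fun x => by simp [hf]) with h | h
  · left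
    intro x
    simpa using h (e.symm x)
  · right
    intro x
    have := congrArg e (h (e.symm x))
    simpa using this

theorem basic_iff : IsBasicMod A T ↔ ∃ (k : ℕ) (X : Fin k → ModuleCat.{0} A),
    Nonempty (T ≃ₗ[A] (∀ a, X a)) ∧ (∀ a, IsIndecomposableMod A (X a)) ∧
      ∀ a b, a ≠ b → IsEmpty (X a ≃ₗ[A] X b) := by
  classical
  constructor
  · rintro ⟨k, N, hN, h1, h2⟩
    refine ⟨k, fun a => ModuleCat.of A (N a), ⟨?_⟩, h1, h2⟩
    exact (LinearEquiv.ofBijective (DirectSum.coeLinearMap N) hN).symm.trans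
      (DirectSum.linearEquivFunOnFintype A (Fin k) fun a => N a)
  · rintro ⟨k, X, ⟨e⟩, h1, h2⟩
    let i : ∀ a, X a →ₗ[A] T := fun a => e.symm.toLinearMap.comp (LinearMap.single A (fun a => X a) a)
    have hi : ∀ a, Function.Injective (i a) := fun a =>
      e.symm.injective.comp (by
        intro x y hxy
        simpa using congrFun hxy a)
    let w : ∀ a, X a ≃ₗ[A] LinearMap.range (i a) := fun a => LinearEquiv.ofInjective (i a) (hi a)
    refine ⟨k, fun a => LinearMap.range (i a), ?_, fun a => indec_equiv (w a) (h1 a), ?_⟩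
    · let E : (DirectSum (Fin k) fun a => LinearMap.range (i a)) ≃ₗ[A] T :=
        ((DirectSum.linearEquivFunOnFintype A (Fin k) fun a => LinearMap.range (i a)).trans
          (LinearEquiv.piCongrRight fun a => (w a).symm)).trans e.symm
      have : DirectSum.coeLinearMap (fun a => LinearMap.range (i a)) = E.toLinearMap := by
        apply DirectSum.linearMap_ext
        intro a
        ext x
        obtain ⟨y, rfl⟩ := (w a).surjective x
        rw [LinearMap.comp_apply, DirectSum.coeLinearMap_lof, LinearMap.comp_apply]
        change i a y = e.symm ((LinearEquiv.piCongrRight fun a => (w a).symm)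
          (DirectSum.linearEquivFunOnFintype A (Fin k) (fun a => LinearMap.range (i a)) _))
        rw [DirectSum.linearEquivFunOnFintype_lof]
        change e.symm (Pi.single a y) = _
        refine congrArg e.symm (funext fun b => ?_)
        by_cases hab : b = a
        · subst hab
          simp
        · simp [hab]
      change Function.Bijective (DirectSum.coeLinearMap (fun a => LinearMap.range (i a)))
      rw [this]
      exact E.bijective
    · intro a b hab
      constructor
      intro f
      exact (h2 a b hab).false (((w a).trans f).trans (w b).symm)

variable [IsNoetherianRing A] 

theorem idem_zero (hG : Good q) [Module.Finite A X] (f : X →ₗ[A] X) (hf : ∀ x, f (f x) = f x)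
    (h : ∀ x, f x ∈ IM q X) (x : X) : f x = 0 := by
  have : Subsingleton (LinearMap.range f) := by
    refine nakayama hG (eq_top_iff.2 ?_)
    rintro ⟨_, y, rfl⟩ -
    have := map_mem_IM f.rangeRestrict (h y)
    convert this using 1
    exact Subtype.ext (hf y).symm
  have h2 : (⟨f x, x, rfl⟩ : LinearMap.range f) = 0 := Subsingleton.elim _ _
  exact congrArg Subtype.val h2

theorem Good.indec_lift (hG : Good q) [Module.Finite A X] {p : X →ₛₗ[q] Z} (hp : IsRed p)
    (h : IsIndecomposableMod B Z) : IsIndecomposableMod A X := by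
  rw [indec_iff] at h ⊢
  obtain ⟨h1, h2⟩ := h
  refine ⟨hp.surj.nontrivial, fun f hf => ?_⟩
  obtain ⟨e, he⟩ := hp.map (p' := p) hG.surj f
  rcases h2 e (fun z => by obtain ⟨x, rfl⟩ := hp.surj z; rw [he, he, hf]) with h | h
  · left
    intro x
    refine idem_zero hG f hf (fun x => hp.ker _ ?_) x
    rw [← he, h]
  · right
    intro x
    have := idem_zero hG (LinearMap.id - f) (fun x => by simp [hf]) (fun x => hp.ker _ (by
      simp [← he, h])) x
    exact (sub_eq_zero.1 this).symm

variable [IsArtinianRing A]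

theorem Good.indec_red (hG : Good q) [Module.Finite A X] (hpd : PdLeOne A X) {p : X →ₛₗ[q] Z}
    (hp : IsRed p) (h : IsIndecomposableMod A X) : IsIndecomposableMod B Z := by
  have h' := h
  rw [indec_iff] at h ⊢
  obtain ⟨h1, -⟩ := h
  constructor
  · by_contra hn
    rw [not_nontrivial_iff_subsingleton] at hn
    have := nakayama (M := X) hG (eq_top_iff.2 fun x _ => hp.ker x (Subsingleton.elim _ _))
    exact not_subsingleton X this
  · intro e he
    obtain ⟨f, hf⟩ := hG.full hpd p hp e
    rcases indec_fitting h' f with ⟨n, hn, h0⟩ | hb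
    · left
      have key : ∀ m x, p ((f ^ (m + 1)) x) = e (p x) := by
        intro m
        induction m with
        | zero => intro x; simpa using hf x
        | succ m ih => intro x; rw [pow_succ, Module.End.mul_apply, ih, hf, he]
      intro z
      obtain ⟨x, rfl⟩ := hp.surj z
      obtain ⟨n, rfl⟩ := Nat.exists_eq_succ_of_ne_zero hn.ne'
      rw [← key n, h0]
      simp
    · right
      intro z
      obtain ⟨x, rfl⟩ := hp.surj z
      obtain ⟨y, rfl⟩ := hb.2 x
      rw [hf, he]

theorem Good.basic_red (hG : Good q) [Module.Finite A T] (hpd : PdLeOne A T) {p : T →ₛₗ[q] Z}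
    (hp : IsRed p) (h : IsBasicMod A T) : IsBasicMod B Z := by
  classical
  rw [basic_iff] at h ⊢
  obtain ⟨k, X, ⟨e⟩, h1, h2⟩ := h
  have hret : ∀ a x, (LinearMap.proj a).comp e.toLinearMap
      ((e.symm.toLinearMap.comp (LinearMap.single A (fun a => X a) a)) x) = x := by
    intro a x; simp
  have hpdX : ∀ a, PdLeOne A (X a) := fun a => pdLeOne_retract _ _ (hret a) hpd
  have hfX : ∀ a, Module.Finite A (X a) := fun a =>
    Module.Finite.of_surjective _ fun x => ⟨_, hret a x⟩
  choose Y pY hY using fun a => exists_red (q := q) hG.surj (X a)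
  refine ⟨k, Y, hp.unique hG.surj (isRed_pi pY hY) e, fun a => hG.indec_red (hpdX a) (hY a) (h1 a),
    fun a b hab => ⟨fun w => ?_⟩⟩
  obtain ⟨v⟩ := hG.reflect (hpdX a) (hpdX b) (hY a) (hY b) w
  exact (h2 a b hab).false v

theorem Good.basic_lift (hG : Good q) [Module.Finite B Z] (hpd : PdLeOne B Z)
    (h : IsBasicMod B Z) : ∃ (T : ModuleCat.{0} A) (p : T →ₛₗ[q] Z), Module.Finite A T ∧
      PdLeOne A T ∧ IsRed p ∧ IsBasicMod A T := by
  classical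
  rw [basic_iff] at h
  obtain ⟨k, Y, ⟨e⟩, h1, h2⟩ := h
  have hret : ∀ a x, (LinearMap.proj a).comp e.toLinearMap
      ((e.symm.toLinearMap.comp (LinearMap.single B (fun a => Y a) a)) x) = x := by
    intro a x; simp
  have hpdY : ∀ a, PdLeOne B (Y a) := fun a => pdLeOne_retract _ _ (hret a) hpd
  have hfY : ∀ a, Module.Finite B (Y a) := fun a =>
    Module.Finite.of_surjective _ fun x => ⟨_, hret a x⟩
  choose X pX hfX hpdX hX using fun a => hG.dense (hpdY a)
  refine ⟨ModuleCat.of A (∀ a, X a), e.symm.toLinearMap.comp (piSemi pX), ?_, ?_, ?_, ?_⟩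
  · exact inferInstanceAs (Module.Finite A (∀ a, X a))
  · exact pdLeOne_pi hpdX
  · exact (isRed_pi pX hX).comp_equiv e.symm
  · rw [basic_iff]
    refine ⟨k, X, ⟨LinearEquiv.refl _ _⟩, fun a => hG.indec_lift (hX a) (h1 a),
      fun a b hab => ⟨fun w => ?_⟩⟩
    obtain ⟨v⟩ := (hX a).unique hG.surj (hX b) w
    exact (h2 a b hab).false v

end Basic

end Hrd

namespace Hrd

section Model

/-- Abstract data from which `Good q` follows. -/
structure Model {A B : Type} [Ring A] [Ring B] (q : A →+* B) (J : Type)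
    (V : J → Type) [∀ p, AddCommGroup (V p)] [∀ p, Module A (V p)] : Type where
  U : ∀ p, Submodule A (V p)
  L : ∀ p, Submodule A (V p)
  e : A ≃ₗ[A] (∀ p, U p)
  fin : ∀ p, Module.Finite A (V p)
  inj : ∀ p, Module.Injective A (V p)
  h1 : ∀ p, ∀ x ∈ IM q (V p), ∃ u ∈ IM q (U p), (u : V p) = x
  e1 : ∀ p p' (f : V p →ₗ[A] V p'), (∀ x, f x ∈ IM q (V p')) ∨ Function.Injective f
  e2 : ∀ p p' (f : V p →ₗ[A] V p'), Function.Injective f → ∀ x ∈ L p, f x ∈ U p'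
  e3 : ∀ p p' (f : V p →ₗ[A] V p'), Function.Injective f → ∃ x ∈ L p, f x ∉ IM q (V p')
  e4 : ∀ p (N : Submodule A (V p)), IsAtom N → N ≤ U p
  e6 : ∀ p, L p ≤ U p

variable {A B : Type} [Ring A] [Ring B] {q : A →+* B} {J : Type}
  {V : J → Type} [∀ p, AddCommGroup (V p)] [∀ p, Module A (V p)]
variable {M N X Y Q : Type} [AddCommGroup M] [Module A M] [AddCommGroup N] [Module A N]
  [AddCommGroup X] [Module A X] [AddCommGroup Y] [Module A Y] [AddCommGroup Q] [Module A Q]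

theorem inj_ext (hQ : Module.Injective A Q) (f : X →ₗ[A] Y) (hf : Function.Injective f)
    (g : X →ₗ[A] Q) : ∃ h : Y →ₗ[A] Q, ∀ x, h (f x) = g x := hQ.out f hf g

theorem inj_pi {ι : Type} {W : ι → Type} [∀ p, AddCommGroup (W p)] [∀ p, Module A (W p)]
    (h : ∀ i, Module.Injective A (W i)) : Module.Injective A (∀ i, W i) := by
  constructor
  intro X Y _ _ _ _ f hf g
  choose k hk using fun i => inj_ext (h i) f hf ((LinearMap.proj i).comp g)
  exact ⟨LinearMap.pi k, fun x => funext fun i => hk i x⟩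

theorem atom_map {N : Submodule A M} (hN : IsAtom N) (f : M →ₗ[A] X) :
    N.map f = ⊥ ∨ IsAtom (N.map f) := by
  by_cases h : N.map f = ⊥
  · exact Or.inl h
  refine Or.inr ⟨h, fun P hP => ?_⟩
  by_cases hc : P.comap f ⊓ N = N
  · exfalso
    refine hP.not_ge (Submodule.map_le_iff_le_comap.2 ?_)
    exact inf_eq_right.1 hc
  · have h0 := hN.2 _ (lt_of_le_of_ne inf_le_right hc)
    rw [eq_bot_iff]
    intro y hy
    obtain ⟨x, hx, rfl⟩ := hP.le hy
    have : x ∈ P.comap f ⊓ N := ⟨hy, hx⟩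
    rw [h0] at this
    simp [(Submodule.mem_bot A).1 this]

theorem exists_atom [IsArtinian A M] {N : Submodule A M} (h : N ≠ ⊥) :
    ∃ P ≤ N, IsAtom P := by
  rcases eq_bot_or_exists_atom_le N with h' | ⟨P, hP, hPN⟩
  · exact absurd h' h
  · exact ⟨P, hPN, hP⟩

variable (D : Model q J V)

/-- The embedding of a free module in an injective module. -/
def Model.io (α : Type) : (α → A) →ₗ[A] (∀ x : α × J, V x.2) :=
  LinearMap.pi fun x => (D.U x.2).subtype.comp
    ((LinearMap.proj x.2).comp (D.e.toLinearMap.comp (LinearMap.proj x.1)))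

theorem Model.io_apply {α : Type} (a : α → A) (x : α × J) :
    D.io α a x = (D.e (a x.1) x.2 : V x.2) := rfl

theorem Model.io_inj (α : Type) : Function.Injective (D.io α) := by
  intro a b h
  ext i
  apply D.e.injective
  ext p
  exact congrFun h (i, p)

theorem Model.mem_io {α : Type} {y : ∀ x : α × J, V x.2} (h : ∀ x, y x ∈ D.U x.2) :
    ∃ a, D.io α a = y := by
  refine ⟨fun i => D.e.symm fun p => ⟨y (i, p), h (i, p)⟩, ?_⟩
  ext x
  simp [D.io_apply]

theorem Model.IM_le_U {p : J} {x : V p} (hx : x ∈ IM q (V p)) : x ∈ D.U p := by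
  obtain ⟨u, -, rfl⟩ := D.h1 p x hx
  exact u.2

variable [Finite J]

theorem Model.mem_io_IM {α : Type} [Finite α] {y : ∀ x : α × J, V x.2}
    (h : y ∈ IM q (∀ x : α × J, V x.2)) : ∃ a ∈ IM q (α → A), D.io α a = y := by
  choose u hu hu' using fun x : α × J => D.h1 x.2 (y x) (map_mem_IM (LinearMap.proj x) h)
  refine ⟨fun i => D.e.symm fun p => u (i, p), mem_IM_pi fun i => ?_, ?_⟩
  · exact map_mem_IM D.e.symm.toLinearMap (mem_IM_pi fun p => hu (i, p))
  · ext x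
    simp [D.io_apply, hu']

theorem Model.io_mem_IM {α : Type} [Finite α] {a : α → A}
    (h : D.io α a ∈ IM q (∀ x : α × J, V x.2)) : a ∈ IM q (α → A) := by
  obtain ⟨b, hb, hab⟩ := D.mem_io_IM h
  rwa [← D.io_inj α hab]

theorem Model.exists_ext {α β : Type} (φ : (α → A) →ₗ[A] (β → A)) :
    ∃ ψ : (∀ x : α × J, V x.2) →ₗ[A] (∀ x : β × J, V x.2),
      ∀ a, ψ (D.io α a) = D.io β (φ a) :=
  inj_ext (inj_pi fun x => D.inj x.2) (D.io α) (D.io_inj α) ((D.io β).comp φ)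

variable [IsArtinianRing A]

theorem Model.exists_split {α β : Type} [Finite α] (φ : (α → A) →ₗ[A] (β → A))
    (hφ : Function.Injective φ) :
    ∃ (ψ : (∀ x : α × J, V x.2) →ₗ[A] (∀ x : β × J, V x.2))
      (ρ : (∀ x : β × J, V x.2) →ₗ[A] (∀ x : α × J, V x.2)),
      (∀ a, ψ (D.io α a) = D.io β (φ a)) ∧ ∀ y, ρ (ψ y) = y := by
  obtain ⟨ψ, hψ⟩ := D.exists_ext φ
  have hfin := D.fin
  have hi : Function.Injective ψ := by
    rw [← LinearMap.ker_eq_bot]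
    by_contra hne
    obtain ⟨N, hN, hat⟩ := exists_atom hne
    refine hat.1 (eq_bot_iff.2 fun y hy => ?_)
    obtain ⟨a, rfl⟩ := D.mem_io (y := y) fun x => by
      have hyx : y x ∈ N.map (LinearMap.proj x) := ⟨y, hy, rfl⟩
      rcases atom_map hat (LinearMap.proj (R := A) (φ := fun x : α × J => V x.2) x) with h | h
      · rw [h, Submodule.mem_bot] at hyx
        rw [hyx]; exact zero_mem _
      · exact D.e4 _ _ h hyx
    have h1 : ψ (D.io α a) = 0 := hN hy
    rw [hψ] at h1
    have h2 : φ a = 0 := D.io_inj β (by rw [h1, map_zero])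
    have h3 : a = 0 := hφ (by rw [h2, map_zero])
    simp [h3]
  obtain ⟨ρ, hρ⟩ := inj_ext (inj_pi fun x : α × J => D.inj x.2) ψ hi LinearMap.id
  exact ⟨ψ, ρ, hψ, hρ⟩

theorem Model.all_IM_of {p p' : J} (f : V p →ₗ[A] V p') (h : ∀ x ∈ D.L p, f x ∈ IM q (V p'))
    (x : V p) : f x ∈ IM q (V p') := by
  rcases D.e1 _ _ f with h' | h'
  · exact h' x
  · obtain ⟨y, hy, hy'⟩ := D.e3 _ _ f h'
    exact absurd (h y hy) hy'

theorem Model.mono_aux (D : Model q J V) {α β : Type} [Finite α] [Finite β] (φ : (α → A) →ₗ[A] (β → A))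
    (h : ∀ x, φ x ∈ IM q (β → A) → x ∈ IM q (α → A)) : Function.Injective φ := by
  rw [← LinearMap.ker_eq_bot]
  by_contra hne
  obtain ⟨N, hN, hat⟩ := exists_atom hne
  obtain ⟨ψ, hψ⟩ := D.exists_ext φ
  obtain ⟨a, haN, ha0⟩ := Submodule.exists_mem_ne_zero_of_ne_bot hat.1
  have : D.io α a ≠ 0 := fun h0 => ha0 (D.io_inj α (by rw [h0, map_zero]))
  obtain ⟨x, hx⟩ := Function.ne_iff.1 this
  let c0 : (α → A) →ₗ[A] V x.2 := (LinearMap.proj x).comp (D.io α)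
  have hc0 : c0 a ≠ 0 := hx
  let c : N →ₗ[A] V x.2 := c0.comp N.subtype
  have hc : Function.Injective c := by
    rw [injective_iff_map_eq_zero]
    intro n hn
    have h1 : LinearMap.ker c0 ⊓ N < N := by
      refine lt_of_le_of_ne inf_le_right fun heq => hc0 ?_
      exact (inf_eq_right.1 heq) haN
    have h2 : (n : α → A) ∈ LinearMap.ker c0 ⊓ N := ⟨hn, n.2⟩
    rw [hat.2 _ h1] at h2
    exact Subtype.ext h2
  obtain ⟨u, hu⟩ := inj_ext (inj_pi fun x : α × J => D.inj x.2) c hc ((D.io α).comp N.subtype)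
  have hua : u (c0 a) = D.io α a := hu ⟨a, haN⟩
  let k : V x.2 →ₗ[A] V x.2 := (LinearMap.proj x).comp u
  have hk : k (c0 a) = c0 a := congrFun hua x
  have hkI : ∀ v, k v - v ∈ IM q (V x.2) := by
    rcases D.e1 _ _ (k - LinearMap.id) with h' | h'
    · exact h'
    · refine absurd (h' (a₁ := c0 a) (a₂ := 0) ?_) hc0
      simp [hk]
  have hki : Function.Injective k := by
    rcases D.e1 _ _ k with h' | h'
    · exfalso
      obtain ⟨v, -, hv⟩ := D.e3 _ _ (LinearMap.id : V x.2 →ₗ[A] V x.2) Function.injective_id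
      apply hv
      have := sub_mem (h' v) (hkI v)
      simpa using this
    · exact h'
  obtain ⟨l, hl, hkl⟩ := D.e3 _ _ k hki
  obtain ⟨b, hb⟩ := D.mem_io (y := u l) fun z => by
    rcases D.e1 _ _ ((LinearMap.proj z).comp u) with h' | h'
    · exact D.IM_le_U (h' l)
    · exact D.e2 _ _ _ h' l hl
  have hb' : b ∉ IM q (α → A) := fun hbI => hkl (by
    have := map_mem_IM (LinearMap.proj (R := A) (φ := fun x : α × J => V x.2) x)
      (map_mem_IM (D.io α) hbI)
    rwa [hb] at this)
  refine hb' (h b (D.io_mem_IM ?_))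
  rw [← hψ, hb]
  refine mem_IM_pi fun z => ?_
  rcases D.e1 _ _ ((LinearMap.proj z).comp (ψ.comp u)) with h' | h'
  · exact h' l
  · refine absurd (h' (a₁ := c0 a) (a₂ := 0) ?_) hc0
    have : φ a = 0 := hN haN
    simp [hua, hψ, this]

theorem Model.good (D : Model q J V) (hq : Function.Surjective q) (hj : RingHom.ker q ≤ Ring.jacobson A) :
    Good q := by
  classical
  refine ⟨hq, hj, fun {α β} _ _ φ => ⟨fun hφ x hx => ?_, D.mono_aux φ⟩, ?_⟩
  · obtain ⟨ψ, ρ, h1, h2⟩ := D.exists_split φ hφ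
    have := map_mem_IM ρ (map_mem_IM (D.io β) hx)
    rw [← h1, h2] at this
    exact D.io_mem_IM this
  · intro α β γ _ _ _ φ θ hφ hθ
    obtain ⟨ψ, ρ, h1, h2⟩ := D.exists_split φ hφ
    obtain ⟨δ, hδ⟩ := D.exists_ext θ
    have hδI : ∀ y, δ y ∈ IM q (∀ x : γ × J, V x.2) := by
      intro y
      cases nonempty_fintype (α × J)
      have : y = ∑ i, LinearMap.single A (fun x : α × J => V x.2) i (y i) := by
        simpa using (LinearMap.sum_single_apply (v := y)).symm
      rw [this, map_sum]
      refine Submodule.sum_mem _ fun x _ => mem_IM_pi fun z => ?_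
      refine D.all_IM_of ((LinearMap.proj z).comp (δ.comp
        (LinearMap.single A (fun x : α × J => V x.2) x))) (fun v hv => ?_) (y x)
      obtain ⟨a, ha⟩ := D.mem_io (y := Pi.single x v) fun w => by
        by_cases hw : w = x
        · subst hw
          simpa using D.e6 _ hv
        · simp [hw]
      have := map_mem_IM (LinearMap.proj (R := A) (φ := fun x : γ × J => V x.2) z)
        (map_mem_IM (D.io γ) (hθ a))
      rw [← hδ, ha] at this
      exact this
    have hr : ∀ b, δ (ρ (D.io β b)) ∈ LinearMap.range (D.io γ) := fun b => by
      obtain ⟨a, -, ha⟩ := D.mem_io_IM (hδI (ρ (D.io β b)))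
      exact ⟨a, ha⟩
    let θ' : (β → A) →ₗ[A] (γ → A) := (LinearEquiv.ofInjective _ (D.io_inj γ)).symm.toLinearMap.comp
      ((δ.comp (ρ.comp (D.io β))).codRestrict (LinearMap.range (D.io γ)) hr)
    have hθ' : ∀ b, D.io γ (θ' b) = δ (ρ (D.io β b)) := fun b => by
      have := LinearEquiv.apply_symm_apply (LinearEquiv.ofInjective _ (D.io_inj γ))
        ((δ.comp (ρ.comp (D.io β))).codRestrict (LinearMap.range (D.io γ)) hr b)
      exact congrArg Subtype.val this
    refine ⟨θ', fun b => D.io_mem_IM (by rw [hθ']; exact hδI _), fun x => D.io_inj γ ?_⟩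
    rw [hθ', ← h1, h2, hδ]

end Model

end Hrd

namespace Hrd

section Rad

variable {A : Type} [Ring A]
variable {M N X Y P V W : Type} [AddCommGroup M] [Module A M] [AddCommGroup N] [Module A N]
  [AddCommGroup X] [Module A X] [AddCommGroup Y] [Module A Y] [AddCommGroup P] [Module A P]
  [AddCommGroup V] [Module A V] [AddCommGroup W] [Module A W]

theorem radSub_eq (N : Submodule A M) : radSub N = (Module.jacobson A N).map N.subtype := rfl

theorem radSub_le (N : Submodule A M) : radSub N ≤ N := Submodule.map_subtype_le _ _

theorem radSub_map (g : M →ₗ[A] X) (hg : Function.Injective g) (N : Submodule A M) :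
    radSub (N.map g) = (radSub N).map g := by
  let w := Submodule.equivMapOfInjective g hg N
  have h := Module.map_jacobson_of_bijective (f := w.toLinearMap) w.bijective
  rw [radSub_eq, ← h, radSub_eq, ← Submodule.map_comp, ← Submodule.map_comp]
  rfl

theorem radIter_map (g : M →ₗ[A] X) (hg : Function.Injective g) (k : ℕ) (N : Submodule A M) :
    radSub^[k] (N.map g) = (radSub^[k] N).map g := by
  induction k with
  | zero => rfl
  | succ k ih => rw [Function.iterate_succ_apply', ih, radSub_map g hg,
      Function.iterate_succ_apply']

theorem radIter_sub (k : ℕ) (N : Submodule A M) :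
    radSub^[k] N = (radSub^[k] (⊤ : Submodule A N)).map N.subtype := by
  rw [← radIter_map _ N.subtype_injective, Submodule.map_subtype_top]

theorem radIter_anti (N : Submodule A M) : Antitone fun k => radSub^[k] N := by
  refine antitone_nat_of_succ_le fun k => ?_
  rw [Function.iterate_succ_apply']
  exact radSub_le _

theorem radSub_lt [IsNoetherian A M] {N : Submodule A M} (h : Nontrivial N) : radSub N < N := by
  have h1 : Module.jacobson A N < ⊤ := Module.jacobson_lt_top A N
  refine lt_of_le_of_ne (radSub_le N) fun heq => h1.ne ?_
  apply Submodule.map_injective_of_injective N.subtype_injective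
  rw [Submodule.map_subtype_top]
  exact heq

theorem radSub_equiv (N : Submodule A M) (N' : Submodule A X) (w : N ≃ₗ[A] N') :
    Nonempty (radSub N ≃ₗ[A] radSub N') := by
  let g : N →ₗ[A] X := N'.subtype.comp w.toLinearMap
  have hg : Function.Injective g := N'.subtype_injective.comp w.injective
  have h1 : N' = (⊤ : Submodule A N).map g := by
    rw [Submodule.map_top, LinearMap.range_comp, LinearEquiv.range, Submodule.map_subtype_top]
  have h2 : radSub N' = (radSub (⊤ : Submodule A N)).map g := by
    conv_lhs => rw [h1]
    exact radSub_map g hg _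
  have h3 : radSub N = (radSub (⊤ : Submodule A N)).map N.subtype := radIter_sub 1 N
  rw [h2, h3]
  exact ⟨(Submodule.equivMapOfInjective _ N.subtype_injective _).symm.trans
    (Submodule.equivMapOfInjective g hg _)⟩

variable [IsArtinianRing A] [IsNoetherianRing A]

theorem proj_local [Module.Finite A P] [Module.Projective A P] (h : IsIndecomposableMod A P)
    (N : Submodule A P) (hN : N ≠ ⊤) : N ≤ Module.jacobson A P := by
  refine le_sInf fun C hC => ?_
  by_contra hle
  have hsup : N ⊔ C = ⊤ := hC.2 _ (by
    refine lt_of_le_of_ne le_sup_right fun heq => hle ?_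
    rw [heq]; exact le_sup_left)
  let g : N →ₗ[A] (P ⧸ C) := C.mkQ.comp N.subtype
  have hg : Function.Surjective g := by
    intro y
    obtain ⟨x, rfl⟩ := C.mkQ_surjective y
    have hx : x ∈ N ⊔ C := hsup ▸ Submodule.mem_top
    obtain ⟨a, ha, b, hb, rfl⟩ := Submodule.mem_sup.1 hx
    refine ⟨⟨a, ha⟩, ?_⟩
    have : C.mkQ b = 0 := (Submodule.Quotient.mk_eq_zero _).2 hb
    simp only [map_add, this, add_zero]
    rfl
  obtain ⟨l, hl⟩ := proj_lift g hg C.mkQ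
  let f : Module.End A P := N.subtype.comp l
  have hf : ∀ x, C.mkQ (f x) = C.mkQ x := hl
  rcases indec_fitting h f with ⟨n, -, hn⟩ | hb
  · apply hC.1
    rw [eq_top_iff]
    intro x _
    have key : ∀ m x, C.mkQ ((f ^ m) x) = C.mkQ x := by
      intro m
      induction m with
      | zero => intro x; simp
      | succ m ih => intro x; rw [pow_succ, Module.End.mul_apply, ih, hf]
    have := key n x
    rw [hn] at this
    exact (Submodule.Quotient.mk_eq_zero _).1 (by rw [LinearMap.zero_apply, map_zero] at this; exact this.symm)
  · apply hN
    rw [eq_top_iff]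
    intro x _
    obtain ⟨y, rfl⟩ := hb.2 x
    exact (l y).2

/-- the first `n` radical layers are indecomposable projective -/
def Uni (A V : Type) [Ring A] [AddCommGroup V] [Module A V] (n : ℕ) : Prop :=
  ∀ j < n, Module.Projective A (radSub^[j] (⊤ : Submodule A V) : Submodule A V) ∧
    IsIndecomposableMod A (radSub^[j] (⊤ : Submodule A V) : Submodule A V)

variable [Module.Finite A V] [Module.Finite A W] {n m : ℕ}

theorem Uni.chain (h : Uni A V n) (N : Submodule A V) (k : ℕ) (hk : k ≤ n) :
    N ≤ radSub^[k] ⊤ ∨ ∃ j < k, N = radSub^[j] ⊤ := by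
  induction k with
  | zero => exact Or.inl le_top
  | succ k ih =>
    rcases ih (by omega) with h1 | ⟨j, hj, h1⟩
    · by_cases heq : N = radSub^[k] ⊤
      · exact Or.inr ⟨k, by omega, heq⟩
      · left
        rw [Function.iterate_succ_apply']
        obtain ⟨hp, hi⟩ := h k (by omega)
        have := proj_local hi (N.comap (radSub^[k] ⊤).subtype) (fun htop => heq (le_antisymm h1 (by
          intro x hx
          have : (⟨x, hx⟩ : (radSub^[k] (⊤ : Submodule A V) : Submodule A V)) ∈
            N.comap (radSub^[k] ⊤).subtype := htop ▸ Submodule.mem_top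
          exact this)))
        intro x hx
        exact ⟨⟨x, h1 hx⟩, this hx, rfl⟩
    · exact Or.inr ⟨j, by omega, h1⟩

theorem Uni.indec (h : Uni A V n) (hn : 0 < n) : IsIndecomposableMod A V :=
  indec_equiv Submodule.topEquiv (h 0 hn).2

theorem Uni.e1 (hV : Uni A V n) (hn : 0 < n) (hW : Uni A W m) (f : V →ₗ[A] W) :
    (∀ x, f x ∈ radSub^[m] (⊤ : Submodule A W)) ∨ Function.Injective f := by
  rcases hW.chain (LinearMap.range f) m le_rfl with h | ⟨j, hj, h⟩
  · exact Or.inl fun x => h ⟨x, rfl⟩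
  · have hp := (hW j hj).1
    rw [← h] at hp
    obtain ⟨s, hs⟩ := proj_lift f.rangeRestrict f.surjective_rangeRestrict LinearMap.id
    have hs' : ∀ x, f (s x) = x := fun x => congrArg Subtype.val (hs x)
    rcases (indec_iff.1 (hV.indec hn)).2 (s.comp f.rangeRestrict) (fun x => by
      simp only [LinearMap.comp_apply]
      rw [hs]; rfl) with h0 | h0
    · left
      intro x
      have := hs' (f.rangeRestrict x)
      have h2 : s (f.rangeRestrict x) = 0 := h0 x
      rw [h2, map_zero] at this
      have h3 : f x = 0 := this.symm
      rw [h3]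
      exact zero_mem _
    · right
      intro x y hxy
      rw [← h0 x, ← h0 y]
      exact congrArg s (Subtype.ext hxy)

theorem bij_of_inj (hV : Module.Injective A V) [Nontrivial V] (hW : IsIndecomposableMod A W)
    (f : V →ₗ[A] W) (hf : Function.Injective f) : Function.Bijective f := by
  refine ⟨hf, ?_⟩
  obtain ⟨r, hr⟩ := inj_ext hV f hf LinearMap.id
  rcases (indec_iff.1 hW).2 (f.comp r) (fun x => by simp [hr]) with h0 | h0
  · obtain ⟨x, hx⟩ := exists_ne (0 : V)
    refine absurd (hf ?_) hx
    have := h0 (f x)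
    simp only [LinearMap.comp_apply, hr, LinearMap.id_apply] at this
    simpa using this
  · exact fun y => ⟨r y, h0 y⟩

theorem bij_rad (f : V →ₗ[A] W) (hf : Function.Bijective f) (k : ℕ) :
    (radSub^[k] (⊤ : Submodule A V)).map f = radSub^[k] ⊤ := by
  rw [← radIter_map f hf.1, Submodule.map_top, LinearMap.range_eq_top.2 hf.2]

theorem Uni.lt (hV : Uni A V n) {j : ℕ} (hj : j < n) :
    radSub^[j + 1] (⊤ : Submodule A V) < radSub^[j] ⊤ := by
  rw [Function.iterate_succ_apply']
  exact radSub_lt (hV j hj).2.1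

theorem Uni.e4 (hV : Uni A V n) (N : Submodule A V) (hN : IsAtom N) {k : ℕ} (hk : k < n) :
    N ≤ radSub^[k] ⊤ := by
  rcases hV.chain N k hk.le with h | ⟨j, hj, rfl⟩
  · exact h
  · exfalso
    have h1 := hN.2 _ (hV.lt (hj.trans hk))
    have h2 := (hV (j + 1) (by omega)).2.1
    rw [h1] at h2
    exact not_subsingleton (⊥ : Submodule A V) inferInstance

end Rad

end Hrd

namespace Hrd

open MulOpposite

section Concrete

variable {R : Type} [Ring R] {S : Type} [Ring S]

/-- the regular right module -/
def opEquiv (R : Type) [Ring R] : Rᵐᵒᵖ ≃ₗ[Rᵐᵒᵖ] R where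
  toFun x := unop x
  invFun x := op x
  map_add' _ _ := rfl
  map_smul' _ _ := rfl
  left_inv _ := rfl
  right_inv _ := rfl

/-- left multiplication -/
def lmul (x : R) : R →ₗ[Rᵐᵒᵖ] R where
  toFun y := x * y
  map_add' y z := mul_add x y z
  map_smul' a y := by simp [← mul_assoc]

@[simp] theorem lmul_apply (x y : R) : lmul x y = x * y := rfl

theorem mem_rightIdeal {x y : R} : y ∈ rightIdeal R x ↔ ∃ z, y = x * z := by
  rw [rightIdeal, Submodule.mem_span_singleton]
  constructor
  · rintro ⟨a, rfl⟩
    exact ⟨unop a, rfl⟩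
  · rintro ⟨z, rfl⟩
    exact ⟨op z, rfl⟩

theorem mem_rightIdeal_idem {x y : R} (hx : IsIdempotentElem x) :
    y ∈ rightIdeal R x ↔ x * y = y := by
  rw [mem_rightIdeal]
  constructor
  · rintro ⟨z, rfl⟩
    rw [← mul_assoc, hx]
  · intro h
    exact ⟨y, h.symm⟩

variable (H : HaradaData R)

/-- index set -/
abbrev Ix := Σ i : Fin H.m, Fin (H.n i)

/-- the right ideal of an index -/
abbrev PP (p : Ix H) : Submodule Rᵐᵒᵖ R := rightIdeal R (H.e p.1 p.2)

/-- the top index -/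
abbrev tp (i : Fin H.m) : Ix H := ⟨i, ⟨0, H.hn i⟩⟩

theorem mem_PP {p : Ix H} {y : R} : y ∈ PP H p ↔ H.e p.1 p.2 * y = y :=
  mem_rightIdeal_idem (H.idem p.1 p.2)

theorem e_mem (p : Ix H) : H.e p.1 p.2 ∈ PP H p := (mem_PP H).2 (H.idem p.1 p.2)

/-- projection on a summand -/
def prj (p : Ix H) : R →ₗ[Rᵐᵒᵖ] PP H p :=
  (lmul (H.e p.1 p.2)).codRestrict _ fun y => mem_rightIdeal.2 ⟨y, rfl⟩

theorem prj_coe (p : Ix H) (y : R) : (prj H p y : R) = H.e p.1 p.2 * y := rfl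

theorem prj_self (p : Ix H) (y : PP H p) : prj H p y = y :=
  Subtype.ext ((mem_PP H).1 y.2)

theorem prj_ne {p p' : Ix H} (h : p ≠ p') (y : PP H p') : prj H p y = 0 := by
  apply Subtype.ext
  rw [prj_coe, ← (mem_PP H).1 y.2, ← mul_assoc, H.orth p p' h, zero_mul]
  rfl

theorem PP_projective (p : Ix H) : Module.Projective Rᵐᵒᵖ (PP H p) := by
  have : Module.Projective Rᵐᵒᵖ R := Module.Projective.of_equiv' (opEquiv R)
  exact Module.Projective.of_split (PP H p).subtype (prj H p) (LinearMap.ext (prj_self H p))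

theorem PP_finite (p : Ix H) : Module.Finite Rᵐᵒᵖ (PP H p) := by
  have : Module.Finite Rᵐᵒᵖ R := Module.Finite.equiv (opEquiv R)
  exact Module.Finite.of_surjective (prj H p) fun y => ⟨y, prj_self H p y⟩

/-- the decomposition of the regular module -/
theorem exists_decomp : Nonempty (R ≃ₗ[Rᵐᵒᵖ] (∀ p, PP H p)) := by
  classical
  refine ⟨LinearEquiv.ofBijective (LinearMap.pi fun p => prj H p) ⟨?_, ?_⟩⟩
  · rw [injective_iff_map_eq_zero]
    intro r hr
    have : r = ∑ p : Ix H, H.e p.1 p.2 * r := by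
      rw [← Finset.sum_mul, H.sum_eq_one, one_mul]
    rw [this]
    refine Finset.sum_eq_zero fun p _ => ?_
    exact congrArg Subtype.val (congrFun hr p)
  · intro y
    refine ⟨∑ p, (y p : R), ?_⟩
    ext p
    simp only [LinearMap.pi_apply, map_sum]
    rw [Finset.sum_eq_single p]
    · rw [prj_self]
    · intro b _ hb
      exact prj_ne H hb.symm _
    · simp

theorem exists_w (i : Fin H.m) (j : ℕ) (hj : j < H.n i) :
    Nonempty (PP H ⟨i, ⟨j, hj⟩⟩ ≃ₗ[Rᵐᵒᵖ]
      (radSub^[j] (⊤ : Submodule Rᵐᵒᵖ (PP H (tp H i))) : Submodule Rᵐᵒᵖ (PP H (tp H i)))) := by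
  induction j with
  | zero => exact ⟨Submodule.topEquiv.symm⟩
  | succ j ih =>
    obtain ⟨w⟩ := ih (by omega)
    obtain ⟨v⟩ := H.rad_iso i ⟨j + 1, hj⟩ (Nat.succ_pos j)
    obtain ⟨u⟩ := radSub_equiv _ _ w
    rw [Function.iterate_succ_apply']
    exact ⟨v.trans u⟩

theorem uni (i : Fin H.m) : Uni Rᵐᵒᵖ (PP H (tp H i)) (H.n i) := by
  intro j hj
  obtain ⟨w⟩ := exists_w H i j hj
  have := PP_projective H ⟨i, ⟨j, hj⟩⟩
  exact ⟨Module.Projective.of_equiv' w, indec_equiv w (H.indec i ⟨j, hj⟩)⟩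

variable (π : R →+* S)

theorem IM_PP (hker : ∀ x : R, π x = 0 ↔ x ∈ H.I) (p : Ix H) : IM (RingHom.op π) (PP H p) = radSub^[H.n p.1 - p.2.val] ⊤ := by
  have hop : ∀ a : Rᵐᵒᵖ, RingHom.op π a = 0 ↔ unop a ∈ H.I := fun a => by
    rw [← hker]
    change op (π (unop a)) = 0 ↔ _
    exact op_eq_zero_iff _
  have hI : ∀ z ∈ H.I, H.e p.1 p.2 * z ∈ radSub^[H.n p.1 - p.2.val] (PP H p) := by
    intro z hz
    have : H.I ≤ (radSub^[H.n p.1 - p.2.val] (PP H p)).comap (lmul (H.e p.1 p.2)) := by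
      refine iSup_le fun p' => ?_
      intro y hy
      have hy' : y ∈ PP H p' := radIter_anti _ (Nat.zero_le _) hy
      rw [Submodule.mem_comap, lmul_apply]
      by_cases hpp : p = p'
      · subst hpp
        rw [(mem_PP H).1 hy']
        exact hy
      · have := congrArg Subtype.val (prj_ne H hpp ⟨y, hy'⟩)
        rw [prj_coe] at this
        change H.e p.1 p.2 * y = 0 at this
        rw [this]
        exact zero_mem _
    exact this hz
  apply le_antisymm
  · refine IM_le fun a y ha => ?_
    have h1 : (y : R) * unop a ∈ H.I := by
      rw [← hker, map_mul, (hker _).2 ((hop a).1 ha), mul_zero]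
    have h2 := hI _ h1
    rw [← mul_assoc, (mem_PP H).1 y.2, radIter_sub] at h2
    obtain ⟨x, hx, hxy⟩ := h2
    have : x = a • y := Subtype.ext hxy
    rwa [← this]
  · intro y hy
    have h1 : (y : R) ∈ H.I := by
      refine Submodule.mem_iSup_of_mem p ?_
      rw [radIter_sub]
      exact ⟨y, hy, rfl⟩
    have h2 : op (y : R) • (⟨H.e p.1 p.2, e_mem H p⟩ : PP H p) = y :=
      Subtype.ext ((mem_PP H).1 y.2)
    rw [← h2]
    exact smul_mem_IM ((hop (op (y : R))).2 h1) _

theorem ker_jac (hker : ∀ x : R, π x = 0 ↔ x ∈ H.I) : RingHom.ker (RingHom.op π) ≤ Ring.jacobson Rᵐᵒᵖ := by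
  intro a ha
  have ha' : unop a ∈ H.I := by
    rw [← hker]
    have : op (π (unop a)) = 0 := ha
    exact (op_eq_zero_iff _).1 this
  have h1 : H.I ≤ Module.jacobson Rᵐᵒᵖ R := by
    refine iSup_le fun p => ?_
    have hp := p.2.2
    refine (radIter_anti (PP H p) (show 1 ≤ H.n p.1 - p.2.val by omega)).trans ?_
    exact Module.map_jacobson_le _
  exact Module.map_jacobson_le (opEquiv R).symm.toLinearMap ⟨_, h1 ha', rfl⟩

theorem inj_same [IsArtinianRing Rᵐᵒᵖ] [IsNoetherianRing Rᵐᵒᵖ] {i i' : Fin H.m}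
    (f : PP H (tp H i) →ₗ[Rᵐᵒᵖ] PP H (tp H i')) (hf : Function.Injective f) :
    i = i' ∧ Function.Bijective f := by
  have := PP_finite H (tp H i)
  have := PP_finite H (tp H i')
  have := (H.indec i ⟨0, H.hn i⟩).1
  have hb := bij_of_inj (H.inj i) (H.indec i' ⟨0, H.hn i'⟩) f hf
  refine ⟨?_, hb⟩
  by_contra hne
  refine (H.basic (tp H i) (tp H i') fun h => hne (congrArg Sigma.fst h)).false ?_
  exact LinearEquiv.ofBijective f hb

theorem good_op (hker : ∀ x : R, π x = 0 ↔ x ∈ H.I) [IsArtinianRing Rᵐᵒᵖ] [IsNoetherianRing Rᵐᵒᵖ] (hπ : Function.Surjective π) :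
    Good (RingHom.op π) := by
  have hq : Function.Surjective (RingHom.op π) := fun b => by
    obtain ⟨a, ha⟩ := hπ (unop b)
    exact ⟨op a, unop_injective ha⟩
  have hfin := PP_finite H
  have hIM : ∀ i, IM (RingHom.op π) (PP H (tp H i)) = radSub^[H.n i] ⊤ := fun i =>
    IM_PP H π hker (tp H i)
  have w : ∀ p : Ix H, PP H p ≃ₗ[Rᵐᵒᵖ] (radSub^[p.2.val] (⊤ : Submodule Rᵐᵒᵖ (PP H (tp H p.1))) :
      Submodule Rᵐᵒᵖ (PP H (tp H p.1))) := fun p => (exists_w H p.1 p.2.val p.2.isLt).some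
  obtain ⟨d⟩ := exists_decomp H
  have D : Model (RingHom.op π) (Ix H) (fun p => PP H (tp H p.1)) :=
    { U := fun p => radSub^[p.2.val] ⊤
      L := fun p => radSub^[H.n p.1 - 1] ⊤
      e := ((opEquiv R).trans d).trans (LinearEquiv.piCongrRight w)
      fin := fun p => hfin _
      inj := fun p => H.inj p.1
      h1 := by
        intro p x hx
        rw [hIM] at hx
        let g : PP H p →ₗ[Rᵐᵒᵖ] PP H (tp H p.1) :=
          (radSub^[p.2.val] (⊤ : Submodule Rᵐᵒᵖ (PP H (tp H p.1)))).subtype.comp (w p).toLinearMap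
        have hg : Function.Injective g := (Submodule.subtype_injective _).comp (w p).injective
        have h1 : radSub^[p.2.val] (⊤ : Submodule Rᵐᵒᵖ (PP H (tp H p.1))) =
            (⊤ : Submodule Rᵐᵒᵖ (PP H p)).map g := by
          rw [Submodule.map_top, LinearMap.range_comp, LinearEquiv.range, Submodule.map_subtype_top]
        have h2 : H.n p.1 = (H.n p.1 - p.2.val) + p.2.val := by
          have := p.2.isLt
          omega
        rw [h2, Function.iterate_add_apply, h1, radIter_map g hg, ← IM_PP H π hker p] at hx
        obtain ⟨y, hy, rfl⟩ := hx
        have hwy := map_mem_IM (N := (radSub^[p.2.val] (⊤ : Submodule Rᵐᵒᵖ (PP H (tp H p.1))) :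
          Submodule Rᵐᵒᵖ (PP H (tp H p.1)))) (w p).toLinearMap hy
        exact ⟨w p y, hwy, rfl⟩
      e1 := by
        intro p p' f
        rw [hIM]
        exact (uni H p.1).e1 (H.hn _) (uni H p'.1) f
      e2 := by
        rintro ⟨i, j⟩ ⟨i', j'⟩ f hf x hx
        obtain ⟨rfl, hb⟩ := inj_same H f hf
        have h1 : f x ∈ radSub^[H.n i - 1] (⊤ : Submodule Rᵐᵒᵖ (PP H (tp H i))) := by
          rw [← bij_rad f hb]
          exact ⟨x, hx, rfl⟩
        have : j'.val < H.n i := j'.isLt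
        exact radIter_anti _ (show j'.val ≤ H.n i - 1 by omega) h1
      e3 := by
        rintro ⟨i, j⟩ ⟨i', j'⟩ f hf
        obtain ⟨rfl, hb⟩ := inj_same H f hf
        by_contra! hcon
        have hn := H.hn i
        have h1 := (uni H i).lt (j := H.n i - 1) (by omega)
        refine h1.not_ge ?_
        rw [← bij_rad f hb, show H.n i - 1 + 1 = H.n i by omega, ← hIM]
        rintro _ ⟨x, hx, rfl⟩
        exact hcon x hx
      e4 := fun p N hN => (uni H p.1).e4 N hN p.2.isLt
      e6 := fun p => radIter_anti _ (by have := p.2.isLt; omega) }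
  exact D.good hq (ker_jac H π hker)

end Concrete

end Hrd

namespace Hrd

open MulOpposite

section Final

variable {R : Type} [Ring R] {S : Type} [Ring S]

theorem tilt_iff {T : Type} [AddCommGroup T] [Module Rᵐᵒᵖ T] :
    IsTiltingRight R T ↔ IsTilt Rᵐᵒᵖ T := by
  constructor
  · rintro ⟨h1, h2, h3, T₀, T₁, f, g, h4, h5, h6, h7, h8⟩
    refine ⟨h1, h2, h3, T₀, T₁, f.comp (opEquiv R).toLinearMap, g, h4, h5,
      h6.comp (opEquiv R).injective, h7, ?_⟩
    rw [LinearMap.range_comp, LinearEquiv.range, Submodule.map_top, h8]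
  · rintro ⟨h1, h2, h3, T₀, T₁, f, g, h4, h5, h6, h7, h8⟩
    refine ⟨h1, h2, h3, T₀, T₁, f.comp (opEquiv R).symm.toLinearMap, g, h4, h5,
      h6.comp (opEquiv R).symm.injective, h7, ?_⟩
    rw [LinearMap.range_comp, LinearEquiv.range, Submodule.map_top, h8]

theorem exists_isRed (I : Submodule Rᵐᵒᵖ R) (π : R →+* S) (hker : ∀ x : R, π x = 0 ↔ x ∈ I)
    {T : Type} [AddCommGroup T] [Module Rᵐᵒᵖ T] {Z : Type} [AddCommGroup Z] [Module Sᵐᵒᵖ Z]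
    (e : RestrictRight π Z ≃ₗ[Rᵐᵒᵖ] (T ⧸ smulSub I T)) :
    ∃ p : T →ₛₗ[RingHom.op π] Z, IsRed p := by
  let p : T →ₛₗ[RingHom.op π] Z :=
    { toFun := fun x => (e.symm ((smulSub I T).mkQ x) : RestrictRight π Z)
      map_add' := fun x y => by
        rw [map_add, map_add]; rfl
      map_smul' := fun a x => by
        rw [map_smul, map_smul]; rfl }
  refine ⟨p, fun z => ?_, fun x hx => ?_⟩
  · obtain ⟨x, hx⟩ := (smulSub I T).mkQ_surjective (e (z : RestrictRight π Z))
    refine ⟨x, ?_⟩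
    change e.symm ((smulSub I T).mkQ x) = (z : RestrictRight π Z)
    rw [hx]
    exact e.symm_apply_apply _
  · have h1 : e.symm ((smulSub I T).mkQ x) = 0 := hx
    rw [LinearEquiv.map_eq_zero_iff] at h1
    have h2 : x ∈ smulSub I T := (Submodule.Quotient.mk_eq_zero _).1 h1
    have h3 : smulSub I T ≤ IM (RingHom.op π) T := by
      refine Submodule.span_le.2 ?_
      rintro _ ⟨t, r, hr, rfl⟩
      refine smul_mem_IM ?_ t
      change op (π (unop (op r))) = 0
      rw [unop_op, (hker r).2 hr, op_zero]
    exact h3 h2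

end Final

end Hrd

/-- Theorem 4.6.  With `R̄ = R/I` (presented by a surjective ring
homomorphism `π : R → S` with kernel `I`) and `F T = T ⊗_R R̄ = T/T·I`: for every basic
tilting right `R`-module `T`, `F T` is a basic tilting right `S`-module, and `T ↦ F T`
induces a bijection between the sets of isomorphism classes of basic tilting right
`R`-modules and of basic tilting right `S`-modules. -/
theorem statement18 (K R : Type) [Field K] [IsAlgClosed K] [Ring R] [Algebra K R]
    [FiniteDimensional K R] (H : HaradaData R)
    (S : Type) [Ring S] (π : R →+* S) (hsurj : Function.Surjective π)
    (hker : ∀ x : R, π x = 0 ↔ x ∈ H.I) :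
    (∀ (T : Type) [AddCommGroup T] [Module Rᵐᵒᵖ T],
      IsTiltingRight R T → IsBasicMod Rᵐᵒᵖ T →
      ∀ FT : ModuleCat.{0} Sᵐᵒᵖ,
        Nonempty (RestrictRight π ↥FT ≃ₗ[Rᵐᵒᵖ] (T ⧸ smulSub H.I T)) →
        IsTiltingRight S ↥FT ∧ IsBasicMod Sᵐᵒᵖ ↥FT) ∧
    ∃ Φ : Quotient (isoSetoid Rᵐᵒᵖ
            fun M => IsTiltingRight R ↥M ∧ IsBasicMod Rᵐᵒᵖ ↥M) →
          Quotient (isoSetoid Sᵐᵒᵖ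
            fun M => IsTiltingRight S ↥M ∧ IsBasicMod Sᵐᵒᵖ ↥M),
      Function.Bijective Φ ∧
      ∀ (T : {M : ModuleCat.{0} Rᵐᵒᵖ // IsTiltingRight R ↥M ∧ IsBasicMod Rᵐᵒᵖ ↥M})
        (N : {M : ModuleCat.{0} Sᵐᵒᵖ // IsTiltingRight S ↥M ∧ IsBasicMod Sᵐᵒᵖ ↥M}),
        Nonempty (RestrictRight π ↥N.1 ≃ₗ[Rᵐᵒᵖ] (↥T.1 ⧸ smulSub H.I ↥T.1)) →
        Φ (Quotient.mk _ T) = Quotient.mk _ N := by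
  classical
  have hfd : Module.Finite K Rᵐᵒᵖ := Module.Finite.equiv (MulOpposite.opLinearEquiv K : R ≃ₗ[K] Rᵐᵒᵖ)
  have hart : IsArtinianRing Rᵐᵒᵖ := isArtinian_of_tower K inferInstance
  have hnoe : IsNoetherianRing Rᵐᵒᵖ := isNoetherian_of_tower K inferInstance
  have hG : Hrd.Good (RingHom.op π) := Hrd.good_op H π hker hsurj
  have part1 : ∀ (T : Type) [AddCommGroup T] [Module Rᵐᵒᵖ T] (Z : Type) [AddCommGroup Z]
      [Module Sᵐᵒᵖ Z] (p : T →ₛₗ[RingHom.op π] Z), Hrd.IsRed p →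
      IsTiltingRight R T → IsBasicMod Rᵐᵒᵖ T → IsTiltingRight S Z ∧ IsBasicMod Sᵐᵒᵖ Z := by
    intro T _ _ Z _ _ p hp hT hb
    have hfin := hT.1
    exact ⟨Hrd.tilt_iff.2 (hG.tilt_red hp (Hrd.tilt_iff.1 hT)), hG.basic_red hT.2.1 hp hb⟩
  refine ⟨?_, ?_⟩
  · intro T _ _ hT hb FT ⟨e⟩
    obtain ⟨p, hp⟩ := Hrd.exists_isRed H.I π hker e
    exact part1 T FT p hp hT hb
  · choose F pF hF using fun M : ModuleCat.{0} Rᵐᵒᵖ =>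
      Hrd.exists_red (q := RingHom.op π) hG.surj M
    let Φ0 : {M : ModuleCat.{0} Rᵐᵒᵖ // IsTiltingRight R ↥M ∧ IsBasicMod Rᵐᵒᵖ ↥M} →
        {M : ModuleCat.{0} Sᵐᵒᵖ // IsTiltingRight S ↥M ∧ IsBasicMod Sᵐᵒᵖ ↥M} :=
      fun M => ⟨F M.1, part1 M.1 (F M.1) (pF M.1) (hF M.1) M.2.1 M.2.2⟩
    refine ⟨Quotient.map' Φ0 ?_, ⟨?_, ?_⟩, ?_⟩
    · rintro M N ⟨e⟩
      exact (hF M.1).unique hG.surj (hF N.1) e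
    · intro a b
      refine Quotient.inductionOn₂' a b fun M N h => ?_
      rw [Quotient.map'_mk'', Quotient.map'_mk'', Quotient.eq''] at h
      obtain ⟨e⟩ := h
      have h1 := M.2.1.1
      have h2 := N.2.1.1
      exact Quotient.sound' (hG.reflect M.2.1.2.1 N.2.1.2.1 (hF M.1) (hF N.1) e)
    · intro b
      refine Quotient.inductionOn' b fun Z => ?_
      have h1 := Z.2.1.1
      obtain ⟨T, p, hfin, hpd, hp, hb⟩ := hG.basic_lift Z.2.1.2.1 Z.2.2
      have hT : IsTiltingRight R T :=
        Hrd.tilt_iff.2 (hG.tilt_lift hpd hp (Hrd.tilt_iff.1 Z.2.1))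
      refine ⟨Quotient.mk'' ⟨T, hT, hb⟩, ?_⟩
      rw [Quotient.map'_mk'']
      exact Quotient.sound' ((hF T).unique hG.surj hp (LinearEquiv.refl _ _))
    · rintro T N ⟨e⟩
      obtain ⟨p, hp⟩ := Hrd.exists_isRed H.I π hker e
      exact Quotient.sound' ((hF T.1).unique hG.surj hp (LinearEquiv.refl _ _))
end
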